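/- Let n ≥ 2 be an integer, α ∈ (1,n), β > 0 and A > 0, and assume α < β. Then there exists a mass m₁ = m₁(n,α,β,A) > 0 such that for every m > m₁, the ball B[m] of volume m centered at 0 is the unique minimizer at mass m of E_{α,β,A}: any minimizer E at mass m coincides with B[m] up to a Lebesgue-null set. -/

import Mathlib

open MeasureTheory Metric Filter ENNReal

noncomputable section

/-- The Lebesgue density of `E` at `x` equals `d`. -/
def HasDensity {n : ℕ} (E : Set (EuclideanSpace ℝ (Fin n)))
    (x : EuclideanSpace ℝ (Fin n)) (d : ℝ) : Prop :=
  Filter.Tendsto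
    (fun r : ℝ => (volume (E ∩ Metric.ball x r)).toReal / (volume (Metric.ball x r)).toReal)
    (nhdsWithin 0 (Set.Ioi 0)) (nhds d)

/-- The essential boundary of `E`: points where `E` has neither density 0 nor density 1. -/
def essBoundary {n : ℕ} (E : Set (EuclideanSpace ℝ (Fin n))) :
    Set (EuclideanSpace ℝ (Fin n)) :=
  {x | ¬ HasDensity E x 0 ∧ ¬ HasDensity E x 1}

/-- The perimeter of `E`: the `(n-1)`-dimensional Hausdorff measure of the essential
boundary of `E`. -/
def perimeter {n : ℕ} (E : Set (EuclideanSpace ℝ (Fin n))) : ℝ≥0∞ :=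
  μH[(n : ℝ) - 1] (essBoundary E)

/-- The Riesz energy `V_α(E) = ∫_{E×E} |x-y|^(α-n) dx dy`. -/
def rieszEnergy {n : ℕ} (α : ℝ) (E : Set (EuclideanSpace ℝ (Fin n))) : ℝ≥0∞ :=
  ∫⁻ x in E, ∫⁻ y in E, ENNReal.ofReal (‖x - y‖ ^ (α - (n : ℝ)))

/-- The potential energy `U_{β,A}(E) = A ∫_E |x|^β dx`. -/
def potEnergy {n : ℕ} (β A : ℝ) (E : Set (EuclideanSpace ℝ (Fin n))) : ℝ≥0∞ :=
  ∫⁻ x in E, ENNReal.ofReal (A * ‖x‖ ^ β)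

/-- The total energy `E_{α,β,A} = P + V_α + U_{β,A}`. -/
def totalEnergy {n : ℕ} (α β A : ℝ) (E : Set (EuclideanSpace ℝ (Fin n))) : ℝ≥0∞ :=
  perimeter E + rieszEnergy α E + potEnergy β A E

/-- `E` is a minimizer of `E_{α,β,A}` at mass `m`. -/
def IsMinimizer {n : ℕ} (α β A m : ℝ) (E : Set (EuclideanSpace ℝ (Fin n))) : Prop :=
  MeasurableSet E ∧ volume E = ENNReal.ofReal m ∧
    ∀ F : Set (EuclideanSpace ℝ (Fin n)), MeasurableSet F → volume F = ENNReal.ofReal m →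
      totalEnergy α β A E ≤ totalEnergy α β A F

/-- The unit ball of `ℝⁿ` centered at the origin. -/
def unitBall (n : ℕ) : Set (EuclideanSpace ℝ (Fin n)) := Metric.ball 0 1

/-- `B[m]`: the open ball centered at `0` with volume `m`. -/
def ballOfVolume (n : ℕ) (m : ℝ) : Set (EuclideanSpace ℝ (Fin n)) :=
  Metric.ball 0 ((m / (volume (unitBall n)).toReal) ^ (1 / (n : ℝ)))


abbrev EE (n : ℕ) := EuclideanSpace ℝ (Fin n)

lemma swap_ineq {n : ℕ} {E B : Set (EE n)} (hE : MeasurableSet E) (hB : MeasurableSet B)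
    (hEB : volume E = volume B) (hfin : volume B ≠ ∞) (g e k : EE n → ℝ≥0∞)
    (hg : Measurable g) (he : Measurable e) (c : ℝ≥0∞) (hc : c ≠ ∞)
    (h1 : ∀ x ∈ B, g x + k x ≤ c + e x) (h2 : ∀ x, x ∉ B → c + k x ≤ g x + e x) :
    (∫⁻ x in B, g x) + ∫⁻ x in symmDiff E B, k x ≤
      (∫⁻ x in E, g x) + ∫⁻ x in symmDiff E B, e x := by
  have hF : MeasurableSet (E \ B) := hE.diff hB
  have hG : MeasurableSet (B \ E) := hB.diff hE
  have hdisj : Disjoint (E \ B) (B \ E) := disjoint_sdiff_sdiff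
  have hs : ∀ f : EE n → ℝ≥0∞, ∫⁻ x in symmDiff E B, f x =
      (∫⁻ x in E \ B, f x) + ∫⁻ x in B \ E, f x := by
    intro f
    rw [Set.symmDiff_def, lintegral_union hG hdisj]
  have hvol : volume (B \ E) = volume (E \ B) := by
    have a1 := measure_inter_add_sdiff (μ := volume) E hB
    have a2 := measure_inter_add_sdiff (μ := volume) B hE
    rw [Set.inter_comm] at a2
    have hne : volume (E ∩ B) ≠ ∞ := ne_top_of_le_ne_top hfin (measure_mono Set.inter_subset_right)
    rw [← hEB, ← a1] at a2
    exact (ENNReal.add_right_inj hne).1 a2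
  have i1 : (∫⁻ x in B \ E, g x) + ∫⁻ x in B \ E, k x ≤ c * volume (E \ B) + ∫⁻ x in B \ E, e x := by
    rw [← lintegral_add_left hg, ← hvol, ← setLIntegral_const, ← lintegral_add_left measurable_const]
    exact setLIntegral_mono (by fun_prop) fun x hx => h1 x hx.1
  have i2 : c * volume (E \ B) + (∫⁻ x in E \ B, k x) ≤ (∫⁻ x in E \ B, g x) + ∫⁻ x in E \ B, e x := by
    rw [← lintegral_add_left hg, ← setLIntegral_const, ← lintegral_add_left measurable_const]
    exact setLIntegral_mono (by fun_prop) fun x hx => h2 x hx.2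
  rw [hs, hs, ← lintegral_inter_add_sdiff g B hE, ← lintegral_inter_add_sdiff g E hB, Set.inter_comm E B]
  have hcv : c * volume (E \ B) ≠ ∞ :=
    ENNReal.mul_ne_top hc (hvol ▸ ne_top_of_le_ne_top hfin (measure_mono Set.sdiff_subset))
  generalize c * volume (E \ B) = q at *
  have i3 := add_le_add i1 i2
  rw [← ENNReal.add_le_add_iff_left hcv]
  calc _ = (∫⁻ x in B ∩ E, g x) + (((∫⁻ x in B \ E, g x) + ∫⁻ x in B \ E, k x) + (q + ∫⁻ x in E \ B, k x)) := by ring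
    _ ≤ (∫⁻ x in B ∩ E, g x) + ((q + ∫⁻ x in B \ E, e x) + ((∫⁻ x in E \ B, g x) + ∫⁻ x in E \ B, e x)) := by gcongr
    _ = _ := by ring

/-- radial distance to the sphere of radius `R` -/
def rd {n : ℕ} (R : ℝ) (x : EE n) : ℝ≥0∞ := ENNReal.ofReal |‖x‖ - R|

lemma measurable_rd {n : ℕ} (R : ℝ) : Measurable (rd (n := n) R) := by
  unfold rd; fun_prop

lemma rpow_lower {β R t : ℝ} (hβ : 1 ≤ β) (hR : 0 < R) (ht : R ≤ t) :
    R ^ β + R ^ (β - 1) * (t - R) ≤ t ^ β := by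
  have h1 : R ^ β = R ^ (β - 1) * R := by
    rw [← Real.rpow_add_one hR.ne']; ring_nf
  have ht0 : 0 < t := hR.trans_le ht
  have h2 : t ^ β = t ^ (β - 1) * t := by
    rw [← Real.rpow_add_one ht0.ne']; ring_nf
  have h3 : R ^ (β - 1) ≤ t ^ (β - 1) := Real.rpow_le_rpow hR.le ht (by linarith)
  rw [h1, h2]; nlinarith

lemma rpow_upper {β R t : ℝ} (hβ : 1 ≤ β) (hR : 0 < R) (h0 : 0 ≤ t) (ht : t ≤ R) :
    t ^ β + R ^ (β - 1) * (R - t) ≤ R ^ β := by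
  have h1 : R ^ β = R ^ (β - 1) * R := by
    rw [← Real.rpow_add_one hR.ne']; ring_nf
  rcases h0.eq_or_lt with h | ht0
  · rw [← h, Real.zero_rpow (by linarith), h1]; simp
  have h2 : t ^ β = t ^ (β - 1) * t := by
    rw [← Real.rpow_add_one ht0.ne']; ring_nf
  have h3 : t ^ (β - 1) ≤ R ^ (β - 1) := Real.rpow_le_rpow h0 ht (by linarith)
  rw [h1, h2]; nlinarith

lemma pot_ineq {n : ℕ} {β A R : ℝ} (hβ : 1 ≤ β) (hA : 0 < A) (hR : 0 < R) {E : Set (EE n)}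
    (hE : MeasurableSet E) (hEB : volume E = volume (ball (0 : EE n) R)) :
    potEnergy β A (ball (0 : EE n) R) +
      ENNReal.ofReal (A * R ^ (β - 1)) * ∫⁻ x in symmDiff E (ball (0 : EE n) R), rd R x ≤
    potEnergy β A E := by
  have := swap_ineq hE measurableSet_ball hEB measure_ball_lt_top.ne
    (fun x => ENNReal.ofReal (A * ‖x‖ ^ β)) 0 (fun x => ENNReal.ofReal (A * R ^ (β - 1)) * rd R x)
    (by fun_prop) measurable_const
    (ENNReal.ofReal (A * R ^ β)) ENNReal.ofReal_ne_top ?_ ?_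
  · rw [lintegral_const_mul _ (measurable_rd R)] at this
    simpa [potEnergy] using this
  · intro x hx
    have hx' : ‖x‖ < R := by simpa using hx
    simp only [Pi.zero_apply, add_zero, rd]
    rw [← ENNReal.ofReal_mul (by positivity), ← ENNReal.ofReal_add (by positivity) (by positivity)]
    apply ENNReal.ofReal_le_ofReal
    rw [abs_sub_comm, abs_of_nonneg (by linarith)]
    have := rpow_upper hβ hR (norm_nonneg x) hx'.le
    nlinarith
  · intro x hx
    have hx' : R ≤ ‖x‖ := by simpa using hx
    simp only [Pi.zero_apply, add_zero, rd]
    rw [← ENNReal.ofReal_mul (by positivity), ← ENNReal.ofReal_add (by positivity) (by positivity)]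
    apply ENNReal.ofReal_le_ofReal
    rw [abs_of_nonneg (by linarith)]
    have := rpow_lower hβ hR hx'
    nlinarith

lemma ennreal_two_mul_le (a b : ℝ≥0∞) : a * b + b * a ≤ a * a + b * b := by
  rcases le_total a b with h | h
  · obtain ⟨c, rfl⟩ := le_iff_exists_add.1 h
    have : a * a + (a + c) * (a + c) = (a * (a + c) + (a + c) * a) + c * c := by ring
    rw [this]; exact le_self_add
  · obtain ⟨c, rfl⟩ := le_iff_exists_add.1 h
    have : (b + c) * (b + c) + b * b = ((b + c) * b + b * (b + c)) + c * c := by ring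
    rw [this]; exact le_self_add

lemma tonelli_pos {X Y : Type*} [MeasurableSpace X] [MeasurableSpace Y] (τ : Measure Y) [SFinite τ]
    (μ ν : Measure X) [SFinite μ] [SFinite ν] (h : Y → X → ℝ≥0∞) (hh : Measurable (Function.uncurry h)) :
    ∫⁻ x, ∫⁻ y, ∫⁻ p, h p x * h p y ∂τ ∂ν ∂μ = ∫⁻ p, (∫⁻ x, h p x ∂μ) * (∫⁻ y, h p y ∂ν) ∂τ := by
  have m1 : ∀ x, Measurable (fun p => h p x) := fun x => hh.comp (measurable_id.prodMk measurable_const)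
  have m2 : ∀ p, Measurable (h p) := fun p => hh.comp (measurable_const.prodMk measurable_id)
  have m3 : Measurable (fun p => ∫⁻ y, h p y ∂ν) := hh.lintegral_prod_right'
  calc _ = ∫⁻ x, ∫⁻ p, ∫⁻ y, h p x * h p y ∂ν ∂τ ∂μ := by
        apply lintegral_congr; intro x
        rw [lintegral_lintegral_swap]
        apply Measurable.aemeasurable
        exact ((m1 x).comp measurable_snd).mul (hh.comp measurable_swap)
    _ = ∫⁻ x, ∫⁻ p, h p x * ∫⁻ y, h p y ∂ν ∂τ ∂μ := by
        apply lintegral_congr; intro x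
        apply lintegral_congr; intro p
        rw [lintegral_const_mul _ (m2 p)]
    _ = ∫⁻ p, ∫⁻ x, h p x * ∫⁻ y, h p y ∂ν ∂μ ∂τ := by
        rw [lintegral_lintegral_swap]
        apply Measurable.aemeasurable
        exact (hh.comp measurable_swap).mul (m3.comp measurable_snd)
    _ = _ := by
        apply lintegral_congr; intro p
        rw [lintegral_mul_const _ (m2 p)]

lemma two_centers {n : ℕ} (x y z : EE n) :
    ‖x - z‖ ^ 2 + ‖y - z‖ ^ 2 = 2 * ‖z - (1 / 2 : ℝ) • (x + y)‖ ^ 2 + ‖x - y‖ ^ 2 / 2 := by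
  have h := parallelogram_law_with_norm ℝ (x - z) (y - z)
  have e1 : x - z - (y - z) = x - y := by abel
  have e2 : x - z + (y - z) = (-2 : ℝ) • (z - (1 / 2 : ℝ) • (x + y)) := by
    rw [smul_sub, smul_smul]; norm_num
    module
  rw [e1, e2, norm_smul] at h
  rw [Real.norm_eq_abs, abs_neg, abs_of_nonneg (by norm_num : (0:ℝ) ≤ 2)] at h
  nlinarith

lemma gauss_inner {n : ℕ} {t : ℝ} (ht : 0 < t) (x y : EE n) :
    ∫⁻ z : EE n, ENNReal.ofReal (Real.exp (-t * ‖x - z‖ ^ 2) * Real.exp (-t * ‖y - z‖ ^ 2)) =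
      ENNReal.ofReal (Real.exp (-(‖x - y‖ ^ 2 / 2 * t)) * (Real.pi / (2 * t)) ^ ((n : ℝ) / 2)) := by
  have h1 : ∀ z : EE n, Real.exp (-t * ‖x - z‖ ^ 2) * Real.exp (-t * ‖y - z‖ ^ 2) =
      Real.exp (-(‖x - y‖ ^ 2 / 2 * t)) * Real.exp (-(2 * t) * ‖z - (1 / 2 : ℝ) • (x + y)‖ ^ 2) := by
    intro z
    rw [← Real.exp_add, ← Real.exp_add]
    congr 1
    have := two_centers x y z
    linear_combination (-t) * this
  simp_rw [h1]
  have hint := GaussianFourier.integral_rexp_neg_mul_sq_norm (V := EE n) (b := 2 * t) (by positivity)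
  have hI : Integrable (fun v : EE n => Real.exp (-(2 * t) * ‖v‖ ^ 2)) := by
    apply Integrable.of_integral_ne_zero
    rw [hint]; positivity
  rw [← ofReal_integral_eq_lintegral_ofReal, integral_const_mul,
    integral_sub_right_eq_self (fun v : EE n => Real.exp (-(2 * t) * ‖v‖ ^ 2)), hint]
  · simp
  · exact (hI.comp_sub_right ((1 / 2 : ℝ) • (x + y))).const_mul _
  · exact Eventually.of_forall fun z => by positivity

def hk {n : ℕ} (s : ℝ) (p : ℝ × EE n) (x : EE n) : ℝ≥0∞ :=
  ENNReal.ofReal (p.1 ^ ((s - 1) / 2) * Real.exp (-p.1 * ‖x - p.2‖ ^ 2))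

lemma measurable_hk {n : ℕ} (s : ℝ) : Measurable (Function.uncurry (hk (n := n) s)) := by
  unfold hk Function.uncurry
  fun_prop

lemma riesz_gauss {n : ℕ} {α : ℝ} (hαn : α < n) : ∃ C : ℝ≥0∞, C ≠ 0 ∧ C ≠ ∞ ∧
    ∀ x y : EE n, x ≠ y → C * ENNReal.ofReal (‖x - y‖ ^ (α - (n : ℝ))) =
      ∫⁻ p, hk (n - α / 2) p x * hk (n - α / 2) p y
        ∂((volume.restrict (Set.Ioi (0 : ℝ))).prod (volume : Measure (EE n))) := by
  set a : ℝ := (n - α) / 2 with ha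
  have ha0 : 0 < a := by rw [ha]; linarith
  refine ⟨ENNReal.ofReal ((Real.pi / 2) ^ ((n : ℝ) / 2) * Real.Gamma a * 2 ^ a), ?_, ENNReal.ofReal_ne_top, ?_⟩
  · have := Real.Gamma_pos_of_pos ha0
    simp only [ne_eq, ENNReal.ofReal_eq_zero, not_le]; positivity
  intro x y hxy
  have hd : 0 < ‖x - y‖ := norm_pos_iff.2 (sub_ne_zero.2 hxy)
  set d := ‖x - y‖ with hdd
  have mh := measurable_hk (n := n) (n - α / 2)
  have m1 : ∀ x : EE n, Measurable (fun p => hk (n - α / 2) p x) :=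
    fun x => mh.comp (measurable_id.prodMk measurable_const)
  have m2 : Measurable (fun p => hk (n - α / 2) p x * hk (n - α / 2) p y) := (m1 x).mul (m1 y)
  rw [lintegral_prod _ m2.aemeasurable]
  have h2 : ∀ t ∈ Set.Ioi (0 : ℝ), ∫⁻ z : EE n, hk (n - α / 2) (t, z) x * hk (n - α / 2) (t, z) y =
      ENNReal.ofReal ((Real.pi / 2) ^ ((n : ℝ) / 2) * (t ^ (a - 1) * Real.exp (-(d ^ 2 / 2 * t)))) := by
    intro t ht
    have ht' : (0 : ℝ) < t := ht
    have h3 : ∀ z : EE n, hk (n - α / 2) (t, z) x * hk (n - α / 2) (t, z) y =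
        ENNReal.ofReal (t ^ (n - α / 2 - 1)) *
          ENNReal.ofReal (Real.exp (-t * ‖x - z‖ ^ 2) * Real.exp (-t * ‖y - z‖ ^ 2)) := by
      intro z
      unfold hk
      rw [← ENNReal.ofReal_mul (by positivity), ← ENNReal.ofReal_mul (by positivity)]
      congr 1
      have : t ^ (n - α / 2 - 1) = t ^ ((n - α / 2 - 1) / 2) * t ^ ((n - α / 2 - 1) / 2) := by
        rw [← Real.rpow_add ht']; ring_nf
      rw [this]; ring
    simp_rw [h3]
    rw [lintegral_const_mul _ (by fun_prop), gauss_inner ht', ← ENNReal.ofReal_mul (by positivity)]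
    congr 1
    have e1 : (Real.pi / (2 * t)) ^ ((n : ℝ) / 2) = (Real.pi / 2) ^ ((n : ℝ) / 2) * t ^ (-((n : ℝ) / 2)) := by
      rw [Real.rpow_neg ht'.le, ← div_div, Real.div_rpow (by positivity) ht'.le]; rfl
    have e2 : t ^ (a - 1) = t ^ (n - α / 2 - 1) * t ^ (-((n : ℝ) / 2)) := by
      rw [← Real.rpow_add ht']; congr 1; rw [ha]; ring
    rw [e1, e2]; ring
  rw [setLIntegral_congr_fun measurableSet_Ioi h2]
  have hG := Real.integral_rpow_mul_exp_neg_mul_Ioi (a := a) (r := d ^ 2 / 2) ha0 (by positivity)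
  have hGp := Real.Gamma_pos_of_pos ha0
  rw [← ofReal_integral_eq_lintegral_ofReal, integral_const_mul, hG, ← ENNReal.ofReal_mul (by positivity)]
  · congr 1
    have : (1 / (d ^ 2 / 2)) ^ a = 2 ^ a * d ^ (α - n) := by
      rw [one_div_div, Real.div_rpow (by norm_num) (by positivity), ← Real.rpow_natCast d 2,
        ← Real.rpow_mul hd.le, div_eq_mul_inv, ← Real.rpow_neg hd.le]
      congr 2; rw [ha]; push_cast; ring
    rw [this]; ring
  · apply Integrable.const_mul
    apply Integrable.of_integral_ne_zero
    rw [hG]; positivity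
  · filter_upwards [ae_restrict_mem measurableSet_Ioi] with t ht
    have ht' : (0 : ℝ) < t := ht
    simp only [Pi.zero_apply]
    positivity

/-- Positive definiteness of the Riesz kernel, for two sets. -/
lemma riesz_posdef {n : ℕ} (hn : 2 ≤ n) {α : ℝ} (hαn : α < n) (E B : Set (EE n)) :
    2 * ∫⁻ x in E, ∫⁻ y in B, ENNReal.ofReal (‖x - y‖ ^ (α - (n : ℝ))) ≤
      rieszEnergy α E + rieszEnergy α B := by
  obtain ⟨C, hC0, hCt, hC⟩ := riesz_gauss hαn
  have : Nontrivial (EE n) := by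
    have : Nonempty (Fin n) := ⟨⟨0, by omega⟩⟩
    infer_instance
  set τ := (volume.restrict (Set.Ioi (0 : ℝ))).prod (volume : Measure (EE n))
  set h := hk (n := n) (n - α / 2)
  have key : ∀ S T : Set (EE n), C * ∫⁻ x in S, ∫⁻ y in T, ENNReal.ofReal (‖x - y‖ ^ (α - (n : ℝ))) =
      ∫⁻ p, (∫⁻ x in S, h p x) * (∫⁻ y in T, h p y) ∂τ := by
    intro S T
    rw [← tonelli_pos τ _ _ h (measurable_hk _), ← lintegral_const_mul']
    swap; · exact hCt
    apply lintegral_congr; intro x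
    rw [← lintegral_const_mul' _ _ hCt]
    apply lintegral_congr_ae
    have : ∀ᵐ y ∂(volume.restrict T), y ≠ x := by
      apply ae_restrict_of_ae
      rw [ae_iff]; simp
    filter_upwards [this] with y hy
    exact hC x y hy.symm
  have hfin : C * (2 * ∫⁻ x in E, ∫⁻ y in B, ENNReal.ofReal (‖x - y‖ ^ (α - (n : ℝ)))) ≤
      C * (rieszEnergy α E + rieszEnergy α B) := by
    unfold rieszEnergy
    rw [mul_add, key, key, mul_left_comm, key, two_mul]
    have mh := measurable_hk (n := n) (n - α / 2)
    have m3 : ∀ S : Set (EE n), Measurable (fun p => ∫⁻ y in S, h p y) := fun S => mh.lintegral_prod_right'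
    have m4 : ∀ S T : Set (EE n), Measurable (fun p => (∫⁻ x in S, h p x) * ∫⁻ y in T, h p y) :=
      fun S T => (m3 S).mul (m3 T)
    rw [← lintegral_add_left (m4 E B), ← lintegral_add_left (m4 E E)]
    apply lintegral_mono
    intro p
    have := ennreal_two_mul_le (∫⁻ x in E, h p x) (∫⁻ x in B, h p x)
    simpa [mul_comm] using this
  exact (ENNReal.mul_le_mul_iff_right hC0 hCt).1 hfin

lemma nontriv_EE {n : ℕ} (hn : 2 ≤ n) : Nontrivial (EE n) := by
  have : Nonempty (Fin n) := ⟨⟨0, by omega⟩⟩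
  infer_instance

lemma lint_norm_unit {n : ℕ} (hn : 2 ≤ n) {b : ℝ} (hbn : b < n) :
    ∫⁻ y in ball (0 : EE n) 1, ENNReal.ofReal (‖y‖ ^ (-b)) ≠ ∞ := by
  have := nontriv_EE hn
  have h : IntegrableOn (fun y : EE n => ‖y‖ ^ (-b)) (ball 0 1) := by
    rw [integrableOn_fun_norm_addHaar volume (f := fun t => t ^ (-b))]
    have h1 : IntegrableOn (fun t : ℝ => t ^ ((n : ℝ) - 1 - b)) (Set.Ioo 0 1) := by
      have := (intervalIntegral.intervalIntegrable_rpow' (a := 0) (b := 1) (r := (n : ℝ) - 1 - b) (by linarith)).1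
      exact this.mono_set Set.Ioo_subset_Ioc_self
    refine h1.congr_fun ?_ measurableSet_Ioo
    intro t ht
    have ht0 : (0 : ℝ) < t := ht.1
    simp only [finrank_euclideanSpace, Fintype.card_fin, smul_eq_mul]
    rw [← Real.rpow_natCast, ← Real.rpow_add ht0, Nat.cast_sub (by omega)]
    congr 1
    push_cast; ring
  have h2 := h.2
  rw [hasFiniteIntegral_iff_ofReal (Eventually.of_forall fun y => by positivity)] at h2
  exact h2.ne

lemma lint_comp_smul {n : ℕ} (f : EE n → ℝ≥0∞) {R : ℝ} (hR : 0 < R) :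
    ∫⁻ x, f (R • x) = ENNReal.ofReal |(R ^ Module.finrank ℝ (EE n))⁻¹| • ∫⁻ x, f x := by
  have h := Measure.map_addHaar_smul (volume : Measure (EE n)) hR.ne'
  rw [← lintegral_smul_measure, ← h]
  exact ((Homeomorph.smulOfNeZero R hR.ne').toMeasurableEquiv.measurableEmbedding.lintegral_map f).symm

lemma lint_norm_ball {n : ℕ} {b R : ℝ} (hR : 0 < R) :
    ∫⁻ y in ball (0 : EE n) R, ENNReal.ofReal (‖y‖ ^ (-b)) =
      ENNReal.ofReal (R ^ ((n : ℝ) - b)) * ∫⁻ y in ball (0 : EE n) 1, ENNReal.ofReal (‖y‖ ^ (-b)) := by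
  have h := lint_comp_smul ((ball (0 : EE n) R).indicator fun y => ENNReal.ofReal (‖y‖ ^ (-b))) hR
  rw [← lintegral_indicator measurableSet_ball, ← lintegral_indicator measurableSet_ball]
  have e : ∀ x : EE n, (ball (0 : EE n) R).indicator (fun y => ENNReal.ofReal (‖y‖ ^ (-b))) (R • x) =
      ENNReal.ofReal (R ^ (-b)) * (ball (0 : EE n) 1).indicator (fun y => ENNReal.ofReal (‖y‖ ^ (-b))) x := by
    intro x
    by_cases hx : ‖x‖ < 1
    · rw [Set.indicator_of_mem, Set.indicator_of_mem, ← ENNReal.ofReal_mul (by positivity), norm_smul,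
        Real.norm_of_nonneg hR.le, Real.mul_rpow hR.le (norm_nonneg _)]
      · simpa using hx
      · simp only [mem_ball_zero_iff, norm_smul, Real.norm_of_nonneg hR.le]; nlinarith
    · rw [Set.indicator_of_notMem, Set.indicator_of_notMem, mul_zero]
      · simpa using hx
      · simp only [mem_ball_zero_iff, norm_smul, Real.norm_of_nonneg hR.le]
        push Not at hx ⊢; nlinarith
  simp_rw [e] at h
  rw [lintegral_const_mul' _ _ ENNReal.ofReal_ne_top] at h
  simp only [finrank_euclideanSpace, Fintype.card_fin] at h
  rw [abs_of_pos (by positivity)] at h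
  have h3 : ENNReal.ofReal (R ^ n) * ENNReal.ofReal (R ^ n)⁻¹ = 1 := by
    rw [← ENNReal.ofReal_mul (by positivity), mul_inv_cancel₀ (by positivity), ENNReal.ofReal_one]
  have h4 : ENNReal.ofReal (R ^ ((n : ℝ) - b)) = ENNReal.ofReal (R ^ n) * ENNReal.ofReal (R ^ (-b)) := by
    rw [← ENNReal.ofReal_mul (by positivity), ← Real.rpow_natCast, ← Real.rpow_add hR]; rfl
  rw [h4, mul_assoc, h, smul_eq_mul, ← mul_assoc, h3, one_mul]

lemma riesz_pot_bound {n : ℕ} (hn : 2 ≤ n) {b : ℝ} (hb0 : 0 < b) (hbn : b < n) :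
    ∃ C : ℝ≥0∞, C ≠ ∞ ∧ ∀ (R : ℝ), 0 < R → ∀ x : EE n,
      ∫⁻ y in ball (0 : EE n) R, ENNReal.ofReal (‖x - y‖ ^ (-b)) ≤ C * ENNReal.ofReal (R ^ ((n : ℝ) - b)) := by
  have := nontriv_EE hn
  refine ⟨(∫⁻ y in ball (0 : EE n) 1, ENNReal.ofReal (‖y‖ ^ (-b))) + volume (ball (0 : EE n) 1),
    ENNReal.add_ne_top.2 ⟨lint_norm_unit hn hbn, measure_ball_lt_top.ne⟩, ?_⟩
  intro R hR x
  have h1 : ∫⁻ y in ball x R, ENNReal.ofReal (‖x - y‖ ^ (-b)) =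
      ∫⁻ y in ball (0 : EE n) R, ENNReal.ofReal (‖y‖ ^ (-b)) := by
    rw [← lintegral_indicator measurableSet_ball, ← lintegral_indicator measurableSet_ball]
    rw [← lintegral_sub_left_eq_self _ x]
    apply lintegral_congr; intro y
    by_cases hy : ‖y‖ < R
    · rw [Set.indicator_of_mem, Set.indicator_of_mem]
      · simp
      · simpa using hy
      · simpa [mem_ball, dist_eq_norm] using hy
    · rw [Set.indicator_of_notMem, Set.indicator_of_notMem]
      · simpa using hy
      · simpa [mem_ball, dist_eq_norm] using hy
  have h2 : ∫⁻ y in ball (0 : EE n) R \ ball x R, ENNReal.ofReal (‖x - y‖ ^ (-b)) ≤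
      volume (ball (0 : EE n) 1) * ENNReal.ofReal (R ^ ((n : ℝ) - b)) := by
    calc _ ≤ ∫⁻ y in ball (0 : EE n) R \ ball x R, ENNReal.ofReal (R ^ (-b)) := by
          apply setLIntegral_mono measurable_const
          intro y hy
          apply ENNReal.ofReal_le_ofReal
          have : R ≤ ‖x - y‖ := by
            have := hy.2
            rw [mem_ball, dist_comm, dist_eq_norm] at this; linarith
          exact Real.rpow_le_rpow_of_nonpos hR this (by linarith)
      _ = ENNReal.ofReal (R ^ (-b)) * volume (ball (0 : EE n) R \ ball x R) := by rw [setLIntegral_const]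
      _ ≤ ENNReal.ofReal (R ^ (-b)) * volume (ball (0 : EE n) R) := by
          gcongr; exact Set.sdiff_subset
      _ = _ := by
          rw [Measure.addHaar_ball_of_pos _ _ hR, finrank_euclideanSpace, Fintype.card_fin, ← mul_assoc,
            ← ENNReal.ofReal_mul (by positivity), ← Real.rpow_natCast, ← Real.rpow_add hR, mul_comm]
          congr 3; ring
  calc _ ≤ ∫⁻ y in ball x R ∪ (ball (0 : EE n) R \ ball x R), ENNReal.ofReal (‖x - y‖ ^ (-b)) := by
        apply lintegral_mono_set
        rw [Set.union_sdiff_self]; exact Set.subset_union_right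
    _ ≤ _ := lintegral_union_le _ _ _
    _ ≤ _ := by
        rw [h1, lint_norm_ball hR, add_mul]
        apply add_le_add _ h2
        rw [mul_comm]

lemma rpow_tangent {a u w : ℝ} (ha : 0 < a) (hu : 0 < u) (hw : 0 < w) :
    u ^ (-a) ≤ w ^ (-a) + a * |u - w| * u ^ (-(a + 1)) := by
  have h1 : u ^ (-(a + 1)) = u ^ (-a) / u := by
    rw [neg_add, ← sub_eq_add_neg, Real.rpow_sub_one hu.ne']
  have h2 : 1 - a * (w / u - 1) ≤ (w / u) ^ (-a) := by
    have hp : 0 < w / u := by positivity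
    rw [Real.rpow_def_of_pos hp]
    have := Real.add_one_le_exp (Real.log (w / u) * -a)
    have := Real.log_le_sub_one_of_pos hp
    nlinarith
  rw [Real.div_rpow hw.le hu.le] at h2
  have hua : 0 < u ^ (-a) := by positivity
  rw [le_div_iff₀ hua] at h2
  rw [h1]
  have h3 : a * (w - u) ≤ a * |u - w| := by
    have := neg_le_abs (u - w)
    nlinarith
  have e : (1 - a * (w / u - 1)) * u ^ (-a) = u ^ (-a) - a * (w - u) * (u ^ (-a) / u) := by
    field_simp
  rw [e] at h2
  have h4 : a * (w - u) * (u ^ (-a) / u) ≤ a * |u - w| * (u ^ (-a) / u) := by gcongr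
  linarith

def vB {n : ℕ} (α R : ℝ) (x : EE n) : ℝ≥0∞ :=
  ∫⁻ y in ball (0 : EE n) R, ENNReal.ofReal (‖x - y‖ ^ (α - (n : ℝ)))

lemma measurable_vB {n : ℕ} (α R : ℝ) : Measurable (vB (n := n) α R) := by
  unfold vB
  have : Measurable (Function.uncurry fun (x y : EE n) => ENNReal.ofReal (‖x - y‖ ^ (α - (n : ℝ)))) := by
    unfold Function.uncurry; fun_prop
  exact this.lintegral_prod_right'

lemma vB_radial {n : ℕ} (α R : ℝ) {x x' : EE n} (h : ‖x‖ = ‖x'‖) : vB α R x = vB α R x' := by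
  symm
  unfold vB
  set φ := (ℝ ∙ (x - x'))ᗮ.reflection
  have hφ : φ x = x' := Submodule.reflection_sub h
  have hmp := φ.measurePreserving
  have hpre : φ ⁻¹' (ball (0 : EE n) R) = ball 0 R := by ext y; simp
  rw [← hmp.setLIntegral_comp_preimage_emb φ.toMeasurableEquiv.measurableEmbedding, hpre]
  apply lintegral_congr
  intro y
  rw [← hφ, ← map_sub, φ.norm_map]

lemma vB_lip {n : ℕ} (hn : 2 ≤ n) {α : ℝ} (hα1 : 1 < α) (hαn : α < n) :
    ∃ C : ℝ, 0 ≤ C ∧ ∀ R : ℝ, 0 < R → ∀ x x' : EE n,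
      vB α R x ≤ vB α R x' + ENNReal.ofReal (C * R ^ (α - 1)) * ENNReal.ofReal ‖x - x'‖ := by
  have := nontriv_EE hn
  obtain ⟨C, hC, hCb⟩ := riesz_pot_bound hn (b := n - α + 1) (by linarith) (by linarith)
  refine ⟨(n - α) * C.toReal, by have : 0 ≤ C.toReal := toReal_nonneg; nlinarith, ?_⟩
  intro R hR x x'
  have ha : (0 : ℝ) < n - α := by linarith
  have hae : ∀ z : EE n, ∀ᵐ y ∂(volume.restrict (ball (0 : EE n) R)), y ≠ z := by
    intro z
    apply ae_restrict_of_ae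
    rw [ae_iff]; simp
  calc vB α R x ≤ ∫⁻ y in ball (0 : EE n) R, (ENNReal.ofReal (‖x' - y‖ ^ (α - (n : ℝ))) +
        ENNReal.ofReal ((n - α) * ‖x - x'‖) * ENNReal.ofReal (‖x - y‖ ^ (-(n - α + 1)))) := by
        unfold vB
        apply lintegral_mono_ae
        filter_upwards [hae x, hae x'] with y hy hy'
        rw [← ENNReal.ofReal_mul (by positivity), ← ENNReal.ofReal_add (by positivity) (by positivity)]
        apply ENNReal.ofReal_le_ofReal
        have h1 : 0 < ‖x - y‖ := norm_pos_iff.2 (sub_ne_zero.2 hy.symm)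
        have h2 : 0 < ‖x' - y‖ := norm_pos_iff.2 (sub_ne_zero.2 hy'.symm)
        have h3 := rpow_tangent ha h1 h2
        rw [neg_sub] at h3
        refine h3.trans ?_
        gcongr
        have := abs_norm_sub_norm_le (x - y) (x' - y)
        simpa using this
    _ = vB α R x' + ENNReal.ofReal ((n - α) * ‖x - x'‖) *
          ∫⁻ y in ball (0 : EE n) R, ENNReal.ofReal (‖x - y‖ ^ (-(n - α + 1))) := by
        rw [lintegral_add_left (by fun_prop), lintegral_const_mul' _ _ ENNReal.ofReal_ne_top]; rfl
    _ ≤ vB α R x' + ENNReal.ofReal ((n - α) * ‖x - x'‖) * (C * ENNReal.ofReal (R ^ ((n : ℝ) - (n - α + 1)))) := by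
        gcongr; exact hCb R hR x
    _ = _ := by
        congr 1
        nth_rewrite 1 [← ENNReal.ofReal_toReal hC]
        have : 0 ≤ C.toReal := toReal_nonneg
        rw [← ENNReal.ofReal_mul this, ← ENNReal.ofReal_mul (by positivity), ← ENNReal.ofReal_mul (by positivity)]
        congr 1
        have : (n : ℝ) - (n - α + 1) = α - 1 := by ring
        rw [this]; ring

lemma vB_fin {n : ℕ} (hn : 2 ≤ n) {α : ℝ} (hα1 : 1 < α) (hαn : α < n) {R : ℝ} (hR : 0 < R) :
    ∃ C : ℝ≥0∞, C ≠ ∞ ∧ ∀ x : EE n, vB α R x ≤ C := by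
  obtain ⟨C, hC, hCb⟩ := riesz_pot_bound hn (b := n - α) (by linarith) (by linarith)
  refine ⟨C * ENNReal.ofReal (R ^ ((n : ℝ) - (n - α))), ENNReal.mul_ne_top hC ENNReal.ofReal_ne_top, fun x => ?_⟩
  have := hCb R hR x
  rwa [neg_sub] at this

lemma exists_sphere_pt {n : ℕ} (hn : 2 ≤ n) {R : ℝ} (hR : 0 < R) (x : EE n) :
    ∃ x' : EE n, ‖x'‖ = R ∧ ‖x - x'‖ = |‖x‖ - R| := by
  have := nontriv_EE hn
  by_cases hx : x = 0
  · obtain ⟨v, hv⟩ := exists_norm_eq (EE n) hR.le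
    exact ⟨v, hv, by simp [hx, hv, abs_of_pos hR]⟩
  · have hx0 : 0 < ‖x‖ := norm_pos_iff.2 hx
    refine ⟨(R / ‖x‖) • x, ?_, ?_⟩
    · rw [norm_smul, Real.norm_of_nonneg (by positivity)]; field_simp
    · have : x - (R / ‖x‖) • x = ((‖x‖ - R) / ‖x‖) • x := by
        rw [sub_div, div_self hx0.ne', sub_smul, one_smul]
      rw [this, norm_smul, Real.norm_eq_abs, abs_div, abs_of_pos hx0]; field_simp

lemma riesz_fin {n : ℕ} (hn : 2 ≤ n) {α : ℝ} (hα1 : 1 < α) (hαn : α < n) {R : ℝ} (hR : 0 < R) :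
    rieszEnergy α (ball (0 : EE n) R) ≠ ∞ := by
  obtain ⟨C, hC, hCb⟩ := vB_fin hn hα1 hαn hR
  have : rieszEnergy α (ball (0 : EE n) R) ≤ C * volume (ball (0 : EE n) R) := by
    rw [← setLIntegral_const]
    exact lintegral_mono fun x => hCb x
  exact ne_top_of_le_ne_top (ENNReal.mul_ne_top hC measure_ball_lt_top.ne) this

lemma riesz_ineq {n : ℕ} (hn : 2 ≤ n) {α : ℝ} (hα1 : 1 < α) (hαn : α < n) :
    ∃ C : ℝ, 0 ≤ C ∧ ∀ R : ℝ, 0 < R → ∀ E : Set (EE n), MeasurableSet E →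
      volume E = volume (ball (0 : EE n) R) →
      rieszEnergy α (ball (0 : EE n) R) ≤ rieszEnergy α E +
        ENNReal.ofReal (C * R ^ (α - 1)) * ∫⁻ x in symmDiff E (ball (0 : EE n) R), rd R x := by
  have := nontriv_EE hn
  obtain ⟨C, hC0, hC⟩ := vB_lip hn hα1 hαn
  refine ⟨2 * C, by positivity, ?_⟩
  intro R hR E hE hEB
  obtain ⟨v, hv⟩ := exists_norm_eq (EE n) hR.le
  obtain ⟨M, hM, hMb⟩ := vB_fin hn hα1 hαn hR
  have h1 := swap_ineq hE measurableSet_ball hEB measure_ball_lt_top.ne (vB α R)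
    (fun x => ENNReal.ofReal (C * R ^ (α - 1)) * rd R x) 0 (measurable_vB α R)
    (by have := measurable_rd (n := n) R; fun_prop) (vB α R v)
    (ne_top_of_le_ne_top hM (hMb v)) ?_ ?_
  · have h2 := riesz_posdef hn hαn E (ball (0 : EE n) R)
    change 2 * ∫⁻ x in E, vB α R x ≤ _ at h2
    rw [lintegral_const_mul _ (measurable_rd R)] at h1
    simp only [Pi.zero_apply, lintegral_const, zero_mul, add_zero] at h1
    change rieszEnergy α (ball (0 : EE n) R) ≤ _ at h1
    rw [← ENNReal.add_le_add_iff_left (riesz_fin hn hα1 hαn hR)]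
    calc _ = 2 * rieszEnergy α (ball (0 : EE n) R) := by rw [two_mul]
      _ ≤ 2 * ((∫⁻ x in E, vB α R x) + ENNReal.ofReal (C * R ^ (α - 1)) *
            ∫⁻ x in symmDiff E (ball (0 : EE n) R), rd R x) := by gcongr
      _ = 2 * (∫⁻ x in E, vB α R x) + (2 * ENNReal.ofReal (C * R ^ (α - 1))) *
            ∫⁻ x in symmDiff E (ball (0 : EE n) R), rd R x := by ring
      _ ≤ (rieszEnergy α E + rieszEnergy α (ball (0 : EE n) R)) + (2 * ENNReal.ofReal (C * R ^ (α - 1))) *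
            ∫⁻ x in symmDiff E (ball (0 : EE n) R), rd R x := by gcongr
      _ = _ := by
          rw [mul_assoc 2 C, ENNReal.ofReal_mul (p := 2) (by norm_num), ENNReal.ofReal_ofNat]; ring
  · intro x _
    obtain ⟨x', hx', hd⟩ := exists_sphere_pt hn hR x
    simp only [Pi.zero_apply, add_zero]
    rw [vB_radial α R (hv.trans hx'.symm), rd, ← hd]
    exact hC R hR x x'
  · intro x _
    obtain ⟨x', hx', hd⟩ := exists_sphere_pt hn hR x
    simp only [Pi.zero_apply, add_zero]
    rw [vB_radial α R (hv.trans hx'.symm), rd, ← hd, norm_sub_rev]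
    exact hC R hR x' x

abbrev UG (n : ℕ) := unitary (EE n →L[ℝ] EE n)

instance instContStarEE (n : ℕ) : ContinuousStar (EE n →L[ℝ] EE n) where
  continuous_star := (ContinuousLinearMap.adjoint (𝕜 := ℝ) (E := EE n) (F := EE n)).continuous

instance instCompactUG (n : ℕ) : CompactSpace (UG n) := by
  refine isCompact_iff_compactSpace.1 ?_
  apply Metric.isCompact_of_isClosed_isBounded isClosed_unitary
  refine (isBounded_closedBall (x := (0 : EE n →L[ℝ] EE n)) (r := 1)).subset ?_
  intro u hu
  rw [mem_closedBall_zero_iff]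
  apply ContinuousLinearMap.opNorm_le_bound _ zero_le_one
  intro x
  rw [one_mul]
  exact (Unitary.norm_map (⟨u, hu⟩ : UG n) x).le

lemma sphere_unique {n : ℕ} (μ ν : Measure (EE n)) [IsFiniteMeasure μ] [IsFiniteMeasure ν]
    (hμ : ∀ φ : EE n ≃ₗᵢ[ℝ] EE n, μ.map φ = μ) (hν : ∀ φ : EE n ≃ₗᵢ[ℝ] EE n, ν.map φ = ν)
    (hμs : ∀ᵐ x ∂μ, ‖x‖ = 1) (hνs : ∀ᵐ x ∂ν, ‖x‖ = 1) (T : Set (EE n)) (hT : MeasurableSet T) :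
    μ T * ν Set.univ = ν T * μ Set.univ := by
  by_cases hne : ∃ v : EE n, ‖v‖ = 1
  swap
  · push Not at hne
    have h1 : μ = 0 := by
      rw [← ae_eq_bot, ← eventually_false_iff_eq_bot]
      filter_upwards [hμs] with x hx using hne x hx
    have h2 : ν = 0 := by
      rw [← ae_eq_bot, ← eventually_false_iff_eq_bot]
      filter_upwards [hνs] with x hx using hne x hx
    simp [h1, h2]
  obtain ⟨v, hv⟩ := hne
  let η : Measure (UG n) := Measure.haar
  have hη0 : η Set.univ ≠ 0 := (NeZero.ne _)
  have hηt : η Set.univ ≠ ∞ := measure_ne_top _ _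
  let f : EE n → ℝ≥0∞ := T.indicator 1
  have hf : Measurable f := measurable_one.indicator hT
  have hact : Continuous (fun p : UG n × EE n => ((p.1⁻¹ : UG n) : EE n →L[ℝ] EE n) p.2) := by
    have h1 : Continuous (fun p : UG n × EE n => ((p.1⁻¹ : UG n) : EE n →L[ℝ] EE n)) :=
      continuous_subtype_val.comp (continuous_inv.comp continuous_fst)
    exact h1.clm_apply continuous_snd
  let Φ : EE n → ℝ≥0∞ := fun x => ∫⁻ g : UG n, f (((g⁻¹ : UG n) : EE n →L[ℝ] EE n) x) ∂η
  have hΦ : ∀ x : EE n, ‖x‖ = 1 → Φ x = Φ v := by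
    intro x hx
    let h : UG n := Unitary.linearIsometryEquiv.symm ((ℝ ∙ (v - x))ᗮ.reflection)
    have hh : (h : EE n →L[ℝ] EE n) v = x := by
      change (ℝ ∙ (v - x))ᗮ.reflection v = x
      exact Submodule.reflection_sub (hv.trans hx.symm)
    change ∫⁻ g : UG n, f (((g⁻¹ : UG n) : EE n →L[ℝ] EE n) x) ∂η = _
    rw [← lintegral_mul_left_eq_self _ h]
    apply lintegral_congr
    intro g
    rw [← hh]
    congr 1
    have : ((h * g)⁻¹ * h : UG n) = g⁻¹ := by group
    rw [← this]; rfl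
  have key : ∀ (ρ : Measure (EE n)) [IsFiniteMeasure ρ], (∀ φ : EE n ≃ₗᵢ[ℝ] EE n, ρ.map φ = ρ) →
      (∀ᵐ x ∂ρ, ‖x‖ = 1) → ρ T * η Set.univ = Φ v * ρ Set.univ := by
    intro ρ _ hρ hρs
    have h1 : ∫⁻ x, Φ x ∂ρ = Φ v * ρ Set.univ := by
      rw [← lintegral_const]
      apply lintegral_congr_ae
      filter_upwards [hρs] with x hx using hΦ x hx
    rw [← h1]
    change _ = ∫⁻ x, ∫⁻ g : UG n, f (((g⁻¹ : UG n) : EE n →L[ℝ] EE n) x) ∂η ∂ρ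
    rw [lintegral_lintegral_swap]
    swap
    · exact (hf.comp (hact.measurable.comp measurable_swap)).aemeasurable
    rw [← lintegral_const]
    apply lintegral_congr
    intro g
    have h2 : ∫⁻ x, f ((Unitary.linearIsometryEquiv g⁻¹) x) ∂ρ = ∫⁻ x, f x ∂ρ := by
      rw [← lintegral_map hf (LinearIsometryEquiv.continuous _).measurable, hρ]
    have h3 : ∫⁻ x, f x ∂ρ = ρ T := lintegral_indicator_one hT
    rw [← h3, ← h2]; rfl
  have k1 := key μ hμ hμs
  have k2 := key ν hν hνs
  have : (μ T * ν Set.univ) * η Set.univ = (ν T * μ Set.univ) * η Set.univ := by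
    calc _ = (μ T * η Set.univ) * ν Set.univ := by ring
      _ = (ν T * η Set.univ) * μ Set.univ := by rw [k1, k2]; ring
      _ = _ := by ring
  exact (ENNReal.mul_left_inj hη0 hηt).1 this

/-- radial projection to the unit sphere -/
def rp {n : ℕ} (x : EE n) : EE n := ‖x‖⁻¹ • x

lemma measurable_rp {n : ℕ} : Measurable (rp (n := n)) := by unfold rp; fun_prop

lemma norm_rp {n : ℕ} {x : EE n} (hx : x ≠ 0) : ‖rp x‖ = 1 := by
  unfold rp; rw [norm_smul, norm_inv, norm_norm, inv_mul_cancel₀ (norm_ne_zero_iff.2 hx)]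

lemma rp_smul {n : ℕ} {t : ℝ} (ht : 0 < t) (x : EE n) : rp (t • x) = rp x := by
  unfold rp
  rw [norm_smul, Real.norm_of_nonneg ht.le, smul_smul, mul_inv, mul_right_comm, inv_mul_cancel₀ ht.ne', one_mul]

lemma norm_smul_rp {n : ℕ} (x : EE n) : ‖x‖ • rp x = x := by
  by_cases hx : x = 0
  · simp [hx]
  · unfold rp; rw [smul_smul, mul_inv_cancel₀ (norm_ne_zero_iff.2 hx), one_smul]

lemma dist_rp_le {n : ℕ} {r : ℝ} (hr : 0 < r) {x y : EE n} (hx : r ≤ ‖x‖) (hy : r ≤ ‖y‖) :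
    dist (rp x) (rp y) ≤ r⁻¹ * dist x y := by
  rw [dist_eq_norm, dist_eq_norm, inv_mul_eq_div, le_div_iff₀ hr]
  apply le_of_sq_le_sq _ (norm_nonneg _)
  have hx0 : 0 < ‖x‖ := hr.trans_le hx
  have hy0 : 0 < ‖y‖ := hr.trans_le hy
  have h1 : ‖rp x - rp y‖ ^ 2 = 2 - 2 * inner ℝ x y / (‖x‖ * ‖y‖) := by
    rw [norm_sub_sq_real, norm_rp (norm_pos_iff.1 hx0), norm_rp (norm_pos_iff.1 hy0)]
    unfold rp
    rw [real_inner_smul_left, real_inner_smul_right]; field_simp; ring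
  have h2 := norm_sub_sq_real x y
  have h3 : ‖x‖ * ‖y‖ * ‖rp x - rp y‖ ^ 2 ≤ ‖x - y‖ ^ 2 := by
    rw [h1, h2]
    have : ‖x‖ * ‖y‖ * (2 - 2 * inner ℝ x y / (‖x‖ * ‖y‖)) = 2 * (‖x‖ * ‖y‖) - 2 * inner ℝ x y := by
      field_simp
    rw [this]
    nlinarith [sq_nonneg (‖x‖ - ‖y‖)]
  have h4 : r * r ≤ ‖x‖ * ‖y‖ := by gcongr
  nlinarith [sq_nonneg ‖rp x - rp y‖]

lemma lip_rp {n : ℕ} {r : ℝ} (hr : 0 < r) :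
    LipschitzOnWith (Real.toNNReal r⁻¹) (rp (n := n)) {x | r ≤ ‖x‖} := by
  apply LipschitzOnWith.of_dist_le_mul
  intro x hx y hy
  rw [Real.coe_toNNReal _ (by positivity)]
  exact dist_rp_le hr hx hy

lemma hdim {n : ℕ} (hn : 2 ≤ n) (v : EE n) (hv : v ≠ 0) :
    ((Module.finrank ℝ (ℝ ∙ v)ᗮ : ℕ) : ℝ) = (n : ℝ) - 1 := by
  have : Fact (Module.finrank ℝ (EE n) = (n - 1) + 1) := ⟨by simp; omega⟩
  rw [Submodule.finrank_orthogonal_span_singleton (n := n - 1) hv, Nat.cast_sub (by omega)]; simp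

lemma hausdorff_sphere_fin {n : ℕ} (hn : 2 ≤ n) : μH[(n : ℝ) - 1] (sphere (0 : EE n) 1) < ∞ := by
  apply (isCompact_sphere (0 : EE n) 1).measure_lt_top_of_nhdsWithin
  intro v hv
  have hv1 : ‖v‖ = 1 := by simpa using hv
  have hv0 : v ≠ 0 := by intro h; simp [h] at hv1
  have hd := hdim hn v hv0
  set V := (ℝ ∙ v)ᗮ
  have hortho : ∀ z : V, inner ℝ v (z : EE n) = 0 := fun z =>
    Submodule.mem_orthogonal_singleton_iff_inner_right.1 z.2
  have hge : ∀ z : V, 1 ≤ ‖v + z‖ := by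
    intro z
    have h := norm_add_sq_real v (z : EE n)
    rw [hortho z, hv1] at h
    nlinarith [norm_nonneg (v + (z : EE n)), sq_nonneg ‖(z : EE n)‖]
  have hlip : LipschitzOnWith 1 (fun z : V => rp (v + (z : EE n))) (closedBall 0 1) := by
    apply LipschitzOnWith.of_dist_le_mul
    intro z _ w _
    have := dist_rp_le one_pos (hge z) (hge w)
    rw [dist_add_left, inv_one] at this
    exact this
  refine ⟨rp '' ((fun z : V => v + (z : EE n)) '' closedBall 0 1), ?_, ?_⟩
  · rw [mem_nhdsWithin]
    refine ⟨ball v (1 / 2), isOpen_ball, by simp, ?_⟩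
    rintro θ ⟨h1, h2⟩
    have hθ : ‖θ‖ = 1 := by simpa using h2
    have h1' : ‖θ - v‖ < 1 / 2 := by simpa [dist_eq_norm] using h1
    have h3 := norm_sub_sq_real θ v
    rw [hθ, hv1] at h3
    set c := inner ℝ θ v with hc
    have hc1 : 7 / 8 < c := by nlinarith [norm_nonneg (θ - v)]
    have hc0 : 0 < c := by linarith
    have hz : c⁻¹ • θ - v ∈ V := by
      rw [Submodule.mem_orthogonal_singleton_iff_inner_right, inner_sub_right, real_inner_smul_right,
        real_inner_comm, ← hc, real_inner_self_eq_norm_sq, hv1]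
      field_simp; norm_num
    refine ⟨v + (⟨c⁻¹ • θ - v, hz⟩ : V), ⟨⟨c⁻¹ • θ - v, hz⟩, ?_, rfl⟩, ?_⟩
    · rw [mem_closedBall_zero_iff]
      change ‖c⁻¹ • θ - v‖ ≤ 1
      have h5 := norm_sub_sq_real (c⁻¹ • θ) v
      rw [real_inner_smul_left, norm_smul, hθ, hv1, ← hc, Real.norm_of_nonneg (by positivity)] at h5
      have h6 : c⁻¹ * c = 1 := inv_mul_cancel₀ hc0.ne'
      have h7 : c⁻¹ ≤ 8 / 7 := by
        rw [inv_le_comm₀ hc0 (by norm_num)]; norm_num; linarith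
      have h8 : 0 < c⁻¹ := by positivity
      nlinarith [norm_nonneg (c⁻¹ • θ - v)]
    · have : v + (c⁻¹ • θ - v) = c⁻¹ • θ := by abel
      change rp (v + (c⁻¹ • θ - v)) = θ
      rw [this, rp_smul (by positivity)]
      unfold rp; rw [hθ]; simp
  · rw [Set.image_image]
    have h := hlip.hausdorffMeasure_image_le (d := (n : ℝ) - 1) (by
      have : (2 : ℝ) ≤ n := by exact_mod_cast hn
      linarith)
    refine h.trans_lt ?_
    simp only [ENNReal.coe_one, ENNReal.one_rpow, one_mul]
    rw [← hd]
    exact (isCompact_closedBall _ _).measure_lt_top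

lemma hausdorff_sphere_pos {n : ℕ} (hn : 2 ≤ n) : μH[(n : ℝ) - 1] (sphere (0 : EE n) 1) ≠ 0 := by
  have := nontriv_EE hn
  obtain ⟨v, hv1⟩ := exists_norm_eq (EE n) zero_le_one
  have hv0 : v ≠ 0 := by intro h; simp [h] at hv1
  have hd := hdim hn v hv0
  set V := (ℝ ∙ v)ᗮ with hV
  have hlip : LipschitzWith 1 V.orthogonalProjection := Submodule.lipschitzWith_orthogonalProjection V
  have hsub : ball (0 : V) 1 ⊆ V.orthogonalProjection '' sphere (0 : EE n) 1 := by
    intro z hz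
    have hz1 : ‖(z : EE n)‖ < 1 := by simpa using hz
    have hortho : inner ℝ (z : EE n) v = 0 :=
      Submodule.mem_orthogonal_singleton_iff_inner_left.1 z.2
    refine ⟨z + Real.sqrt (1 - ‖(z : EE n)‖ ^ 2) • v, ?_, ?_⟩
    · rw [mem_sphere_zero_iff_norm]
      have h := norm_add_sq_real (z : EE n) (Real.sqrt (1 - ‖(z : EE n)‖ ^ 2) • v)
      rw [real_inner_smul_right, hortho, norm_smul, hv1, Real.norm_of_nonneg (Real.sqrt_nonneg _), mul_one,
        Real.sq_sqrt (by nlinarith [norm_nonneg (z : EE n)])] at h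
      have h2 : ‖(z : EE n) + Real.sqrt (1 - ‖(z : EE n)‖ ^ 2) • v‖ ^ 2 = 1 := by rw [h]; ring
      rw [← Real.sqrt_sq (norm_nonneg ((z : EE n) + Real.sqrt (1 - ‖(z : EE n)‖ ^ 2) • v)), h2, Real.sqrt_one]
    · rw [map_add, map_smul]
      have h1 : V.orthogonalProjection v = 0 := by
        apply Submodule.orthogonalProjection_mem_subspace_orthogonalComplement_eq_zero
        rw [hV, Submodule.orthogonal_orthogonal]
        exact Submodule.mem_span_singleton_self v
      rw [h1, smul_zero, add_zero]
      exact Submodule.orthogonalProjection_mem_subspace_eq_self z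
  intro h0
  have h := (hlip.lipschitzOnWith (s := sphere (0 : EE n) 1)).hausdorffMeasure_image_le (d := (n : ℝ) - 1) (by
      have : (2 : ℝ) ≤ n := by exact_mod_cast hn
      linarith)
  rw [h0, mul_zero, ← hd] at h
  have h2 : μH[(Module.finrank ℝ V : ℝ)] (ball (0 : V) 1) = 0 := le_antisymm ((measure_mono hsub).trans h) bot_le
  exact (isOpen_ball.measure_pos _ ⟨0, by simp⟩).ne' h2

lemma cone_measure {n : ℕ} (hn : 2 ≤ n) (T : Set (EE n)) (hT : MeasurableSet T) :
    volume (ball (0 : EE n) 1 ∩ rp ⁻¹' T) * μH[(n : ℝ) - 1] (sphere (0 : EE n) 1) =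
      μH[(n : ℝ) - 1] (T ∩ sphere (0 : EE n) 1) * volume (ball (0 : EE n) 1) := by
  have := nontriv_EE hn
  have hf := hausdorff_sphere_fin hn
  set H : Measure (EE n) := μH[(n : ℝ) - 1] with hH
  let ν := H.restrict (sphere (0 : EE n) 1)
  let κ := (volume.restrict (ball (0 : EE n) 1)).map (rp (n := n))
  have : IsFiniteMeasure ν := ⟨by simpa [ν] using hf⟩
  have : IsFiniteMeasure κ := ⟨by
    simp only [κ]
    rw [Measure.map_apply measurable_rp MeasurableSet.univ]; simp [measure_ball_lt_top]⟩
  have h := sphere_unique κ ν ?_ ?_ ?_ ?_ T hT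
  · simp only [κ, ν] at h
    rw [Measure.map_apply measurable_rp hT, Measure.map_apply measurable_rp MeasurableSet.univ,
      Measure.restrict_apply (measurable_rp hT), Measure.restrict_apply hT, Set.preimage_univ] at h
    simp only [Measure.restrict_apply_univ] at h
    rw [Set.inter_comm (ball _ _)]
    exact h
  · intro φ
    have hmp : MeasurePreserving φ (volume.restrict (ball (0 : EE n) 1)) (volume.restrict (ball (0 : EE n) 1)) := by
      have h1 := φ.measurePreserving.restrict_preimage (measurableSet_ball (x := (0 : EE n)) (ε := 1))
      have hpre : φ ⁻¹' (ball (0 : EE n) 1) = ball 0 1 := by ext y; simp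
      rwa [hpre] at h1
    simp only [κ]
    have hc : Measurable φ := φ.continuous.measurable
    rw [Measure.map_map hc measurable_rp]
    have : φ ∘ rp = rp ∘ φ := by
      ext1 x; simp [rp, φ.norm_map]
    rw [this, ← Measure.map_map measurable_rp hc, hmp.map_eq]
  · intro φ
    have hmp : MeasurePreserving φ (H.restrict (sphere (0 : EE n) 1)) (H.restrict (sphere (0 : EE n) 1)) := by
      have h0 : MeasurePreserving φ H H := φ.toIsometryEquiv.measurePreserving_hausdorffMeasure _
      have h1 := h0.restrict_preimage (isClosed_sphere (x := (0 : EE n)) (ε := 1)).measurableSet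
      have hpre : φ ⁻¹' (sphere (0 : EE n) 1) = sphere 0 1 := by ext y; simp
      rwa [hpre] at h1
    exact hmp.map_eq
  · simp only [κ]
    rw [ae_map_iff measurable_rp.aemeasurable (measurableSet_eq_fun (by fun_prop) (by fun_prop))]
    apply ae_restrict_of_ae
    have : ∀ᵐ y : EE n, y ≠ 0 := by rw [ae_iff]; simp
    filter_upwards [this] with y hy using norm_rp hy
  · filter_upwards [ae_restrict_mem (isClosed_sphere (x := (0 : EE n)) (ε := 1)).measurableSet] with x hx
    simpa using hx

lemma interval_miss {P t : Set ℝ} (ht : IsPreconnected t) (hf : t ∩ frontier P = ∅) {q : ℝ} (hq : q ∈ t)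
    (hqP : q ∉ P) : t ⊆ Pᶜ := by
  have hcov : t ⊆ interior Pᶜ ∪ interior P := by
    intro x hx
    by_contra h
    simp only [Set.mem_union, not_or] at h
    have : x ∈ t ∩ frontier P := by
      refine ⟨hx, ?_, h.2⟩
      have h1 := h.1
      rw [interior_compl] at h1
      simpa using h1
    rw [hf] at this; exact this
  have hq' : q ∈ interior Pᶜ := by
    rcases hcov hq with h | h
    · exact h
    · exact absurd (interior_subset h) hqP
  have hdis : Disjoint (interior Pᶜ) (interior P) :=
    Set.disjoint_of_subset interior_subset interior_subset (disjoint_compl_left)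
  exact (ht.subset_left_of_subset_union isOpen_interior isOpen_interior hdis hcov ⟨q, hq, hq'⟩).trans interior_subset

lemma baire_core {P A : Set ℝ} (hAP : A ⊆ P) {γ δ : ℝ} (hδ : 0 < δ) (hγ : γ ∈ frontier P)
    (h : frontier P ∩ ball γ δ ⊆ A) :
    ∃ l η : ℝ, 0 < η ∧ l ∈ A ∧ (Set.Ioo l (l + η) ⊆ Pᶜ ∨ Set.Ioo (l - η) l ⊆ Pᶜ) := by
  have hγP : γ ∈ P := hAP (h ⟨hγ, by simpa using hδ⟩)
  have hcl : γ ∈ closure Pᶜ := by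
    rw [closure_compl]; exact hγ.2
  obtain ⟨q, hqP, hqd⟩ := Metric.mem_closure_iff.1 hcl δ hδ
  rw [Real.dist_eq, abs_lt] at hqd
  have hclosed : IsClosed (frontier P) := isClosed_frontier
  have hmem : ∀ l ∈ frontier P, γ - δ < l → l < γ + δ → l ∈ A := by
    intro l hl h1 h2
    exact h ⟨hl, by rw [Real.ball_eq_Ioo]; exact ⟨h1, h2⟩⟩
  have hqF : q ∉ frontier P := fun hq => hqP (hAP (hmem q hq (by linarith) (by linarith)))
  rcases lt_trichotomy q γ with hlt | heq | hgt
  · have hne : (frontier P ∩ Set.Icc q γ).Nonempty := ⟨γ, hγ, hlt.le, le_rfl⟩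
    have hbd : BddBelow (frontier P ∩ Set.Icc q γ) := ⟨q, fun x hx => hx.2.1⟩
    have hm := (hclosed.inter isClosed_Icc).csInf_mem hne hbd
    set l := sInf (frontier P ∩ Set.Icc q γ)
    have hql : q < l := lt_of_le_of_ne hm.2.1 (fun e => hqF (e ▸ hm.1))
    refine ⟨l, l - q, by linarith, hmem l hm.1 (by linarith) (by linarith [hm.2.2]), Or.inr ?_⟩
    have : Set.Ico q l ⊆ Pᶜ := by
      apply interval_miss isPreconnected_Ico _ ⟨le_rfl, hql⟩ hqP
      ext x
      simp only [Set.mem_inter_iff, Set.mem_Ico, Set.mem_empty_iff_false, iff_false]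
      rintro ⟨⟨h1, h2⟩, h3⟩
      exact absurd (csInf_le hbd ⟨h3, h1, by linarith [hm.2.2]⟩) (not_le.2 h2)
    intro x hx
    exact this ⟨by linarith [hx.1], hx.2⟩
  · exact absurd hγP (heq ▸ hqP)
  · have hne : (frontier P ∩ Set.Icc γ q).Nonempty := ⟨γ, hγ, le_rfl, hgt.le⟩
    have hbd : BddAbove (frontier P ∩ Set.Icc γ q) := ⟨q, fun x hx => hx.2.2⟩
    have hm := (hclosed.inter isClosed_Icc).csSup_mem hne hbd
    set l := sSup (frontier P ∩ Set.Icc γ q)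
    have hql : l < q := lt_of_le_of_ne hm.2.2 (fun e => hqF (e ▸ hm.1))
    refine ⟨l, q - l, by linarith, hmem l hm.1 (by linarith [hm.2.1]) (by linarith), Or.inl ?_⟩
    have : Set.Ioc l q ⊆ Pᶜ := by
      apply interval_miss isPreconnected_Ioc _ ⟨hql, le_rfl⟩ hqP
      ext x
      simp only [Set.mem_inter_iff, Set.mem_Ioc, Set.mem_empty_iff_false, iff_false]
      rintro ⟨⟨h1, h2⟩, h3⟩
      exact absurd (le_csSup hbd ⟨h3, by linarith [hm.2.1], h2⟩) (not_le.2 h1)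
    intro x hx
    exact this ⟨hx.1, by linarith [hx.2]⟩

lemma baire_ray {P : Set ℝ} {A B : ℕ → Set ℝ} (hA : ∀ k, IsClosed (A k)) (hB : ∀ k, IsClosed (B k))
    (hAP : ⋃ k, A k = P) (hBP : ⋃ k, B k = Pᶜ) (h1 : P.Nonempty) (h2 : P ≠ Set.univ) :
    ∃ (k : ℕ) (l η : ℝ), 0 < η ∧
      ((l ∈ A k ∧ (Set.Ioo l (l + η) ⊆ Pᶜ ∨ Set.Ioo (l - η) l ⊆ Pᶜ)) ∨
       (l ∈ B k ∧ (Set.Ioo l (l + η) ⊆ P ∨ Set.Ioo (l - η) l ⊆ P))) := by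
  have hne : (frontier P).Nonempty := nonempty_frontier_iff.2 ⟨h1, h2⟩
  have : Nonempty (frontier P) := hne.to_subtype
  have : CompleteSpace (frontier P) := (isClosed_frontier (s := P)).completeSpace_coe
  let f : ℕ ⊕ ℕ → Set (frontier P) := Sum.elim (fun k => (↑) ⁻¹' (A k)) (fun k => (↑) ⁻¹' (B k))
  have hc : ∀ i, IsClosed (f i) := by
    rintro (k | k)
    · exact (hA k).preimage continuous_subtype_val
    · exact (hB k).preimage continuous_subtype_val
  have hU : ⋃ i, f i = Set.univ := by
    ext ⟨x, hx⟩
    simp only [Set.mem_iUnion, Set.mem_univ, iff_true]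
    by_cases hxP : x ∈ P
    · rw [← hAP] at hxP
      obtain ⟨k, hk⟩ := Set.mem_iUnion.1 hxP
      exact ⟨Sum.inl k, hk⟩
    · have hxP : x ∈ Pᶜ := hxP
      rw [← hBP] at hxP
      obtain ⟨k, hk⟩ := Set.mem_iUnion.1 hxP
      exact ⟨Sum.inr k, hk⟩
  obtain ⟨i, ⟨γ, hγ⟩, hi⟩ := nonempty_interior_of_iUnion_of_closed hc hU
  rw [mem_interior_iff_mem_nhds, Metric.mem_nhds_iff] at hi
  obtain ⟨δ, hδ, hball⟩ := hi
  rcases i with k | k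
  · obtain ⟨l, η, hη, hl, h⟩ := baire_core (P := P) (A := A k) (hAP ▸ Set.subset_iUnion A k) hδ hγ (by
      rintro x ⟨hx1, hx2⟩
      exact hball (show (⟨x, hx1⟩ : frontier P) ∈ ball _ δ from hx2))
    exact ⟨k, l, η, hη, Or.inl ⟨hl, h⟩⟩
  · obtain ⟨l, η, hη, hl, h⟩ := baire_core (P := Pᶜ) (A := B k) (hBP ▸ Set.subset_iUnion B k) hδ
      (by rwa [frontier_compl]) (by
      rintro x ⟨hx1, hx2⟩
      rw [frontier_compl] at hx1
      exact hball (show (⟨x, hx1⟩ : frontier P) ∈ ball _ δ from hx2))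
    rw [compl_compl] at h
    exact ⟨k, l, η, hη, Or.inr ⟨hl, h⟩⟩

/-- the small-density constant -/
def cdens (n : ℕ) : ℝ := 1 / 2 * (1 / 96) ^ n

/-- points with uniformly small density of `E` at scales below `1/(k+1)` -/
def Gset {n : ℕ} (E : Set (EE n)) (k : ℕ) : Set (EE n) :=
  {x | ∀ r : ℝ, 0 < r → r < 1 / ((k : ℝ) + 1) →
    volume (E ∩ ball x r) ≤ ENNReal.ofReal (cdens n) * volume (ball (0 : EE n) r)}

lemma cdens_pos (n : ℕ) : 0 < cdens n := by unfold cdens; positivity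

lemma cdens_lt (n : ℕ) : cdens n < 1 := by
  unfold cdens
  have : (1 / 96 : ℝ) ^ n ≤ 1 := pow_le_one₀ (by norm_num) (by norm_num)
  linarith

lemma vball_eq {n : ℕ} (x : EE n) (r : ℝ) : volume (ball x r) = volume (ball (0 : EE n) r) :=
  Measure.addHaar_ball_center _ _ _

lemma vball_pow {n : ℕ} (x : EE n) {r : ℝ} (hr : 0 < r) :
    volume (ball x r) = ENNReal.ofReal (r ^ n) * volume (ball (0 : EE n) 1) := by
  rw [Measure.addHaar_ball_of_pos _ _ hr]; simp

lemma vball_toReal_pos {n : ℕ} (x : EE n) {r : ℝ} (hr : 0 < r) : 0 < (volume (ball x r)).toReal :=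
  ENNReal.toReal_pos (measure_ball_pos _ _ hr).ne' measure_ball_lt_top.ne

lemma dens_compl {n : ℕ} {E : Set (EE n)} (hE : MeasurableSet E) {x : EE n} {d : ℝ}
    (h : HasDensity E x d) : HasDensity Eᶜ x (1 - d) := by
  unfold HasDensity at *
  have h1 := (tendsto_const_nhds (x := (1 : ℝ))).sub h
  refine h1.congr' ?_
  filter_upwards [self_mem_nhdsWithin] with r hr
  have hp := vball_toReal_pos x hr
  have hsum : volume (ball x r) = volume (E ∩ ball x r) + volume (Eᶜ ∩ ball x r) := by
    rw [← measure_inter_add_diff (ball x r) hE, Set.inter_comm, Set.diff_eq, Set.inter_comm (ball x r) Eᶜ]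
  have hf1 : volume (E ∩ ball x r) ≠ ∞ := ((measure_mono Set.inter_subset_right).trans_lt measure_ball_lt_top).ne
  have hf2 : volume (Eᶜ ∩ ball x r) ≠ ∞ := ((measure_mono Set.inter_subset_right).trans_lt measure_ball_lt_top).ne
  have h3 : (volume (ball x r)).toReal = (volume (E ∩ ball x r)).toReal + (volume (Eᶜ ∩ ball x r)).toReal := by
    rw [hsum, ENNReal.toReal_add hf1 hf2]
  rw [eq_div_iff hp.ne', sub_mul, div_mul_cancel₀ _ hp.ne']
  linarith

lemma dens_compl0 {n : ℕ} {E : Set (EE n)} (hE : MeasurableSet E) {x : EE n} :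
    HasDensity Eᶜ x 0 ↔ HasDensity E x 1 := by
  constructor
  · intro h; have := dens_compl hE.compl h; simpa using this
  · intro h; have := dens_compl hE h; simpa using this

lemma dens_compl1 {n : ℕ} {E : Set (EE n)} (hE : MeasurableSet E) {x : EE n} :
    HasDensity Eᶜ x 1 ↔ HasDensity E x 0 := by
  have := dens_compl0 (x := x) hE.compl
  rw [compl_compl] at this; exact this.symm

lemma dens_excl {n : ℕ} {E : Set (EE n)} {x : EE n} (h0 : HasDensity E x 0) (h1 : HasDensity E x 1) : False :=
  zero_ne_one (tendsto_nhds_unique h0 h1)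

lemma ae_dens {n : ℕ} (hn : 2 ≤ n) {E : Set (EE n)} (hE : MeasurableSet E) :
    ∀ᵐ x : EE n, x ∈ E → HasDensity E x 1 := by
  have := nontriv_EE hn
  have h := Besicovitch.ae_tendsto_measure_inter_div (volume : Measure (EE n)) E
  rw [ae_restrict_iff' hE] at h
  filter_upwards [h] with x hx hxE
  have h1 := (ENNReal.tendsto_toReal one_ne_top).comp (hx hxE)
  refine h1.congr fun r => ?_
  simp only [Function.comp_def]
  rw [ENNReal.toReal_div]
  have hae : ball x r =ᵐ[volume] closedBall x r := by
    refine HasSubset.Subset.eventuallyLE ball_subset_closedBall |>.antisymm ?_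
    have h0 : volume (sphere x r) = 0 := Measure.addHaar_sphere _ _ _
    rw [ae_le_set]
    refine measure_mono_null ?_ h0
    rw [closedBall_diff_ball]
  rw [measure_congr hae, measure_congr ((ae_eq_refl E).inter hae)]

lemma ae_dens0 {n : ℕ} (hn : 2 ≤ n) {E : Set (EE n)} (hE : MeasurableSet E) :
    ∀ᵐ x : EE n, x ∉ E → HasDensity E x 0 := by
  filter_upwards [ae_dens hn hE.compl] with x hx hxE
  exact (dens_compl1 hE).1 (hx hxE)

lemma vol_dens_le {n : ℕ} (hn : 2 ≤ n) {E : Set (EE n)} (hE : MeasurableSet E) {S : Set (EE n)}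
    (hS : ∀ x ∈ S, HasDensity E x 1) : volume S ≤ volume (E ∩ S) := by
  apply measure_mono_ae
  filter_upwards [ae_dens0 hn hE] with x hx hxS
  refine ⟨?_, hxS⟩
  by_contra hxE
  exact dens_excl (hx hxE) (hS x hxS)

lemma isClosed_Gset {n : ℕ} (E : Set (EE n)) (k : ℕ) : IsClosed (Gset E k) := by
  rw [← isOpen_compl_iff, Metric.isOpen_iff]
  intro x hx
  simp only [Gset, Set.mem_compl_iff, Set.mem_setOf_eq, not_forall, not_le] at hx
  obtain ⟨r, hr0, hrk, hlt⟩ := hx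
  -- inner approximation of the ball
  have hun : E ∩ ball x r = ⋃ j : ℕ, E ∩ ball x (r - 1 / ((j : ℝ) + 1)) := by
    rw [← Set.inter_iUnion]
    congr 1
    ext y
    simp only [mem_ball, Set.mem_iUnion]
    constructor
    · intro h
      obtain ⟨j, hj⟩ := exists_nat_one_div_lt (sub_pos.2 h)
      exact ⟨j, by linarith⟩
    · rintro ⟨j, hj⟩
      have : 0 < 1 / ((j : ℝ) + 1) := by positivity
      linarith
  have hmono : Monotone fun j : ℕ => E ∩ ball x (r - 1 / ((j : ℝ) + 1)) := by
    intro i j hij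
    apply Set.inter_subset_inter_right
    apply ball_subset_ball
    have : 1 / ((j : ℝ) + 1) ≤ 1 / ((i : ℝ) + 1) := by gcongr
    linarith
  rw [hun, hmono.measure_iUnion] at hlt
  obtain ⟨j, hj⟩ := lt_iSup_iff.1 hlt
  refine ⟨1 / ((j : ℝ) + 1), by positivity, ?_⟩
  intro y hy hyG
  have h := hyG r hr0 hrk
  have hsub : E ∩ ball x (r - 1 / ((j : ℝ) + 1)) ⊆ E ∩ ball y r := by
    apply Set.inter_subset_inter_right
    apply ball_subset_ball'
    rw [dist_comm]; rw [mem_ball] at hy; linarith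
  exact absurd (hj.trans_le ((measure_mono hsub).trans h)) (lt_irrefl _)

lemma dens_iff_G {n : ℕ} {E : Set (EE n)} {x : EE n} (h : HasDensity E x 0) : ∃ k, x ∈ Gset E k := by
  have h1 := h.eventually (gt_mem_nhds (cdens_pos n))
  rw [eventually_nhdsWithin_iff, Metric.eventually_nhds_iff] at h1
  obtain ⟨δ, hδ, hb⟩ := h1
  obtain ⟨k, hk⟩ := exists_nat_one_div_lt hδ
  refine ⟨k, fun r hr hrk => ?_⟩
  have := hb (y := r) (by simp [abs_of_pos hr]; exact hrk.trans hk |>.trans_le le_rfl) hr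
  rw [div_lt_iff₀ (vball_toReal_pos x hr)] at this
  have hf1 : volume (E ∩ ball x r) ≠ ∞ := ((measure_mono Set.inter_subset_right).trans_lt measure_ball_lt_top).ne
  rw [← ENNReal.ofReal_toReal hf1, ← vball_eq x, ← ENNReal.ofReal_toReal (measure_ball_lt_top (x := x) (r := r)).ne,
    ← ENNReal.ofReal_mul (cdens_pos n).le]
  exact ENNReal.ofReal_le_ofReal this.le

lemma G_not_dens {n : ℕ} {E : Set (EE n)} {x : EE n} {k : ℕ} (h : x ∈ Gset E k) : ¬ HasDensity E x 1 := by
  intro h1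
  have h2 : ∀ᶠ r in nhdsWithin (0 : ℝ) (Set.Ioi 0),
      (volume (E ∩ Metric.ball x r)).toReal / (volume (Metric.ball x r)).toReal ≤ cdens n := by
    have hk : (0 : ℝ) < 1 / ((k : ℝ) + 1) := by positivity
    filter_upwards [self_mem_nhdsWithin, Ioo_mem_nhdsGT hk] with r hr hr2
    have h3 := h r hr hr2.2
    rw [div_le_iff₀ (vball_toReal_pos x hr), vball_eq x]
    have h4 := ENNReal.toReal_mono (ENNReal.mul_ne_top ofReal_ne_top measure_ball_lt_top.ne) h3
    rwa [ENNReal.toReal_mul, ENNReal.toReal_ofReal (cdens_pos n).le] at h4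
  have := le_of_tendsto h1 h2
  linarith [cdens_lt n]

/-- positive cone over a set -/
def coneOf {n : ℕ} (W : Set (EE n)) : Set (EE n) := {y | ∃ t : ℝ, 0 < t ∧ t • y ∈ W}

open scoped Pointwise in
lemma cone_density {n : ℕ} (hn : 2 ≤ n) {W : Set (EE n)} (h0 : (0 : EE n) ∉ W) (hC : volume (coneOf W) ≠ 0) :
    ∃ w0 ∈ W, ∃ ρ0 : ℝ, 0 < ρ0 ∧ ∀ ρ, 0 < ρ → ρ < ρ0 → ∀ τ : ℝ, 0 < τ →
      ENNReal.ofReal (1 / 2) * volume (ball (0 : EE n) (τ * ρ)) <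
        volume (coneOf W ∩ closedBall (τ • rp w0) (τ * ρ)) := by
  have := nontriv_EE hn
  have h := Besicovitch.ae_tendsto_measure_inter_div (volume : Measure (EE n)) (coneOf W)
  have hex : ∃ y ∈ coneOf W, Tendsto (fun r => volume (coneOf W ∩ closedBall y r) / volume (closedBall y r))
      (nhdsWithin 0 (Set.Ioi 0)) (nhds 1) := by
    by_contra hcon
    push Not at hcon
    apply hC
    rw [ae_iff] at h
    have h2 := Measure.le_restrict_apply (μ := (volume : Measure (EE n))) (coneOf W)
      {a | ¬ Tendsto (fun r => volume (coneOf W ∩ closedBall a r) / volume (closedBall a r))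
      (nhdsWithin 0 (Set.Ioi 0)) (nhds 1)}
    rw [h] at h2
    have h3 := le_antisymm h2 bot_le
    refine measure_mono_null (show coneOf W ⊆ _ ∩ coneOf W from fun y hy => ⟨hcon y hy, hy⟩) h3
  obtain ⟨y, ⟨t, ht, hty⟩, hy⟩ := hex
  have hy0 : y ≠ 0 := by
    rintro rfl; simp only [smul_zero] at hty; exact h0 hty
  have hyn : 0 < ‖y‖ := norm_pos_iff.2 hy0
  have hlt : ENNReal.ofReal (1 / 2) < 1 := by
    rw [← ENNReal.ofReal_one]; exact (ENNReal.ofReal_lt_ofReal_iff one_pos).2 (by norm_num)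
  have h1 := hy.eventually (lt_mem_nhds hlt)
  rw [eventually_nhdsWithin_iff, Metric.eventually_nhds_iff] at h1
  obtain ⟨δ, hδ, hb⟩ := h1
  refine ⟨t • y, hty, δ / ‖y‖, by positivity, fun ρ hρ hρ0 τ hτ => ?_⟩
  rw [lt_div_iff₀ hyn] at hρ0
  have h2 := hb (y := ρ * ‖y‖) (by rw [dist_zero_right, Real.norm_of_nonneg (by positivity)]; exact hρ0)
    (show 0 < ρ * ‖y‖ by positivity)
  have hv0 : volume (closedBall y (ρ * ‖y‖)) ≠ 0 := (measure_closedBall_pos _ _ (by positivity)).ne'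
  have hvt : volume (closedBall y (ρ * ‖y‖)) ≠ ∞ := measure_closedBall_lt_top.ne
  rw [ENNReal.lt_div_iff_mul_lt (Or.inl hv0) (Or.inl hvt)] at h2
  set a := τ / ‖y‖ with ha
  have ha0 : 0 < a := by positivity
  have hsub : a • (coneOf W ∩ closedBall y (ρ * ‖y‖)) ⊆ coneOf W ∩ closedBall (τ • rp (t • y)) (τ * ρ) := by
    rintro _ ⟨x, ⟨⟨t', ht', hx'⟩, hx⟩, rfl⟩
    refine ⟨⟨t' / a, by positivity, ?_⟩, ?_⟩
    · simp only; rw [smul_smul, div_mul_cancel₀ _ ha0.ne']; exact hx'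
    · rw [rp_smul ht]
      have : τ • rp y = a • y := by unfold rp; rw [smul_smul]; rfl
      rw [this, mem_closedBall]
      simp only
      rw [dist_smul₀, Real.norm_of_nonneg ha0.le]
      rw [mem_closedBall] at hx
      calc a * dist x y ≤ a * (ρ * ‖y‖) := by gcongr
        _ = τ * ρ := by rw [ha]; field_simp
  refine lt_of_lt_of_le ?_ (measure_mono hsub)
  rw [Measure.addHaar_smul]
  simp only [finrank_euclideanSpace, Fintype.card_fin]
  rw [abs_of_pos (by positivity)]
  have e : volume (ball (0 : EE n) (τ * ρ)) = ENNReal.ofReal (a ^ n) * volume (closedBall y (ρ * ‖y‖)) := by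
    rw [Measure.addHaar_closedBall_eq_addHaar_ball, vball_pow _ (show 0 < τ * ρ by positivity), vball_pow _ (show 0 < ρ * ‖y‖ by positivity), ← mul_assoc, ← ENNReal.ofReal_mul (by positivity)]
    congr 2
    rw [← mul_pow]; congr 1; rw [ha]; field_simp
  rw [e, ← mul_assoc, mul_comm (ENNReal.ofReal (1 / 2)), mul_assoc]
  exact (ENNReal.mul_lt_mul_iff_right (by simp; positivity) ofReal_ne_top).2 h2

lemma cone_null {n : ℕ} (hn : 2 ≤ n) {E : Set (EE n)} (hE : MeasurableSet E) {k : ℕ} {W : Set (EE n)}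
    (h0 : (0 : EE n) ∉ W) (hWG : W ⊆ Gset E k)
    (h : ∀ w0 ∈ W, ∃ s0 : ℝ, 0 < s0 ∧ ∀ s, 0 < s → s < s0 → ∃ b ∈ W, ∃ τ : ℝ,
      dist (rp b) (rp w0) ≤ s ∧ 3 * ‖b‖ * s < 1 / ((k : ℝ) + 1) ∧ ‖b‖ / 4 ≤ τ ∧ τ ≤ 2 * ‖b‖ ∧
      |τ - ‖b‖| ≤ 3 / 4 * ‖b‖ * s ∧
      ∀ x ∈ coneOf W, dist x (τ • rp w0) ≤ τ * (s / 8) → HasDensity E x 1) :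
    volume (coneOf W) = 0 := by
  by_contra hC
  obtain ⟨w0, hw0, ρ0, hρ0, hd⟩ := cone_density hn h0 hC
  obtain ⟨s0, hs0, hs⟩ := h w0 hw0
  obtain ⟨s, hsp, hs1⟩ := exists_between (lt_min hs0 hρ0)
  obtain ⟨b, hb, τ, h1, h2, h3, h4, h5, h6⟩ := hs s hsp (hs1.trans_le (min_le_left _ _))
  have hb0 : b ≠ 0 := fun e => h0 (e ▸ hb)
  have hbn : 0 < ‖b‖ := norm_pos_iff.2 hb0
  have hτ : 0 < τ := by linarith
  have hd' := hd (s / 8) (by positivity) (by linarith [hs1.trans_le (min_le_right s0 ρ0)]) τ hτ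
  have hw00 : w0 ≠ 0 := fun e => h0 (e ▸ hw0)
  have hsub : coneOf W ∩ closedBall (τ • rp w0) (τ * (s / 8)) ⊆ ball b (3 * ‖b‖ * s) := by
    rintro x ⟨-, hx⟩
    rw [mem_closedBall] at hx
    rw [mem_ball]
    have t1 : dist (τ • rp w0) (‖b‖ • rp w0) ≤ 3 / 4 * ‖b‖ * s := by
      rw [dist_eq_norm, ← sub_smul, norm_smul, norm_rp hw00, mul_one]; exact h5
    have t2 : dist (‖b‖ • rp w0) b ≤ ‖b‖ * s := by
      have e : dist (‖b‖ • rp w0) b = dist (‖b‖ • rp w0) (‖b‖ • rp b) := by rw [norm_smul_rp b]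
      rw [e, dist_smul₀, norm_norm, dist_comm]; gcongr
    have t3 := dist_triangle4 x (τ • rp w0) (‖b‖ • rp w0) b
    nlinarith [mul_pos hbn hsp]
  have key := vol_dens_le hn hE (S := coneOf W ∩ closedBall (τ • rp w0) (τ * (s / 8)))
    (fun x hx => h6 x hx.1 hx.2)
  have key2 := (measure_mono (μ := volume) (Set.inter_subset_inter_right E hsub)).trans
    (hWG hb (3 * ‖b‖ * s) (by positivity) h2)
  have key3 := hd'.trans_le (key.trans key2)
  rw [vball_pow _ (show 0 < τ * (s / 8) by positivity), vball_pow _ (show 0 < 3 * ‖b‖ * s by positivity), ← mul_assoc, ← mul_assoc,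
    ← ENNReal.ofReal_mul (by norm_num), ← ENNReal.ofReal_mul (cdens_pos n).le] at key3
  have key4 := lt_of_mul_lt_mul_right' key3
  have key5 : cdens n * (3 * ‖b‖ * s) ^ n ≤ 1 / 2 * (τ * (s / 8)) ^ n := by
    unfold cdens
    rw [mul_assoc, ← mul_pow]
    have : 1 / 96 * (3 * ‖b‖ * s) ≤ τ * (s / 8) := by nlinarith [mul_pos hbn hsp]
    have := pow_le_pow_left₀ (by positivity) this n
    linarith
  exact absurd key4 (not_lt.2 (ENNReal.ofReal_le_ofReal key5))

lemma dir_lemma {n : ℕ} {w0 x : EE n} (hw0 : w0 ≠ 0) {τ s : ℝ} (hτ0 : 0 < τ) (hs : 0 < s) (hs1 : s ≤ 1)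
    (hxd : dist x (τ • rp w0) ≤ τ * (s / 8)) :
    |‖x‖ - τ| ≤ τ * (s / 8) ∧ dist (rp x) (rp w0) ≤ s := by
  have hnτ : ‖τ • rp w0‖ = τ := by rw [norm_smul, norm_rp hw0, Real.norm_of_nonneg hτ0.le, mul_one]
  have ha : |‖x‖ - τ| ≤ τ * (s / 8) := by
    refine le_trans ?_ hxd
    rw [dist_eq_norm]
    have := abs_norm_sub_norm_le x (τ • rp w0)
    rwa [hnτ] at this
  refine ⟨ha, ?_⟩
  rw [abs_le] at ha
  have := dist_rp_le (r := τ / 2) (by positivity) (x := x) (y := τ • rp w0) (by nlinarith) (by rw [hnτ]; linarith)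
  have e : rp (rp w0) = rp w0 := by
    conv_lhs => unfold rp
    rw [show ‖‖w0‖⁻¹ • w0‖ = 1 from norm_rp hw0]; simp [rp]
  rw [rp_smul hτ0, e] at this
  refine this.trans ?_
  calc (τ / 2)⁻¹ * dist x (τ • rp w0) ≤ (τ / 2)⁻¹ * (τ * (s / 8)) := by gcongr
    _ = s / 4 := by field_simp; norm_num
    _ ≤ s := by linarith

lemma cone_null_plus {n : ℕ} (hn : 2 ≤ n) {E : Set (EE n)} (hE : MeasurableSet E) (k : ℕ) {p q : ℝ} (hpq : p < q) :
    volume (coneOf {x : EE n | x ∈ Gset E k ∧ x ≠ 0 ∧ ‖x‖ < p ∧ ∀ l : ℝ, 1 < l → l * ‖x‖ < q → HasDensity E (l • x) 1}) = 0 := by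
  set W := {x : EE n | x ∈ Gset E k ∧ x ≠ 0 ∧ ‖x‖ < p ∧ ∀ l : ℝ, 1 < l → l * ‖x‖ < q → HasDensity E (l • x) 1} with hW
  apply cone_null hn hE (k := k) (fun h => h.2.1 rfl) (fun x hx => hx.1)
  intro w0 hw0
  have hp : 0 < p := (norm_nonneg w0).trans_lt hw0.2.2.1
  refine ⟨min 1 (min ((q - p) / p) (1 / (3 * p * ((k : ℝ) + 1)))), by
    have : 0 < q - p := by linarith
    positivity, fun s hs hs' => ?_⟩
  rw [lt_min_iff, lt_min_iff, lt_div_iff₀ hp, lt_div_iff₀ (by positivity)] at hs'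
  obtain ⟨hs1, hs2, hs3⟩ := hs'
  let S := (fun w : EE n => ‖w‖) '' {w | w ∈ W ∧ dist (rp w) (rp w0) ≤ s}
  have hbd : BddAbove S := ⟨p, by rintro _ ⟨w, hw, rfl⟩; exact hw.1.2.2.1.le⟩
  have hmem0 : ‖w0‖ ∈ S := ⟨w0, ⟨hw0, by simpa using hs.le⟩, rfl⟩
  have hσ : 0 < sSup S := (norm_pos_iff.2 hw0.2.1).trans_le (le_csSup hbd hmem0)
  obtain ⟨_, ⟨b, hb, rfl⟩, hbσ⟩ := exists_lt_of_lt_csSup ⟨_, hmem0⟩ (show sSup S / (1 + s / 2) < sSup S from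
    div_lt_self hσ (by linarith))
  rw [div_lt_iff₀ (by positivity)] at hbσ
  have hbp : ‖b‖ < p := hb.1.2.2.1
  have hbn : 0 < ‖b‖ := norm_pos_iff.2 hb.1.2.1
  have hbs : 0 < ‖b‖ * s := by positivity
  refine ⟨b, hb.1, ‖b‖ * (1 + 3 / 4 * s), hb.2, ?_, by nlinarith, by nlinarith, ?_, ?_⟩
  · rw [lt_div_iff₀ (by positivity)]
    calc 3 * ‖b‖ * s * ((k : ℝ) + 1) ≤ 3 * p * s * ((k : ℝ) + 1) := by gcongr
      _ < 1 := by linarith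
  · rw [abs_of_nonneg (by nlinarith)]; nlinarith
  · rintro x ⟨t, ht, hx⟩ hxd
    set τ := ‖b‖ * (1 + 3 / 4 * s) with hτ
    have hτ0 : 0 < τ := by positivity
    obtain ⟨ha, hdir⟩ := dir_lemma hw0.2.1 hτ0 hs hs1.le hxd
    rw [abs_le] at ha
    have hx1 : ‖b‖ * (1 + s / 2) < ‖x‖ := by nlinarith
    have hx2 : ‖x‖ < ‖b‖ * (1 + s) := by nlinarith
    have hx0 : 0 < ‖x‖ := by nlinarith
    rw [← rp_smul ht x] at hdir
    have hle : ‖t • x‖ ≤ sSup S := le_csSup hbd ⟨_, ⟨hx, hdir⟩, rfl⟩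
    rw [norm_smul, Real.norm_of_nonneg ht.le] at hle
    have hfin := hx.2.2.2 t⁻¹ (by rw [one_lt_inv₀ ht]; nlinarith) (by
      rw [norm_smul, Real.norm_of_nonneg ht.le, ← mul_assoc, inv_mul_cancel₀ ht.ne', one_mul]
      nlinarith)
    rwa [smul_smul, inv_mul_cancel₀ ht.ne', one_smul] at hfin

lemma cone_null_minus {n : ℕ} (hn : 2 ≤ n) {E : Set (EE n)} (hE : MeasurableSet E) (k : ℕ) {p q : ℝ} (hq : 0 < q)
    (hpq : q < p) :
    volume (coneOf {x : EE n | x ∈ Gset E k ∧ x ≠ 0 ∧ p < ‖x‖ ∧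
      ∀ l : ℝ, 0 < l → l < 1 → q < l * ‖x‖ → HasDensity E (l • x) 1}) = 0 := by
  set W := {x : EE n | x ∈ Gset E k ∧ x ≠ 0 ∧ p < ‖x‖ ∧
      ∀ l : ℝ, 0 < l → l < 1 → q < l * ‖x‖ → HasDensity E (l • x) 1} with hW
  apply cone_null hn hE (k := k) (fun h => h.2.1 rfl) (fun x hx => hx.1)
  intro w0 hw0
  have hp : 0 < p := hq.trans hpq
  have hwn : 0 < ‖w0‖ := norm_pos_iff.2 hw0.2.1
  refine ⟨min 1 (min ((p - q) / p) (1 / (3 * (2 * ‖w0‖) * ((k : ℝ) + 1)))), by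
    have : 0 < p - q := by linarith
    positivity, fun s hs hs' => ?_⟩
  rw [lt_min_iff, lt_min_iff, lt_div_iff₀ hp, lt_div_iff₀ (by positivity)] at hs'
  obtain ⟨hs1, hs2, hs3⟩ := hs'
  let S := (fun w : EE n => ‖w‖) '' {w | w ∈ W ∧ dist (rp w) (rp w0) ≤ s}
  have hbd : BddBelow S := ⟨p, by rintro _ ⟨w, hw, rfl⟩; exact hw.1.2.2.1.le⟩
  have hmem0 : ‖w0‖ ∈ S := ⟨w0, ⟨hw0, by simpa using hs.le⟩, rfl⟩
  have hσ : 0 < sInf S := hp.trans_le (le_csInf ⟨_, hmem0⟩ (by rintro _ ⟨w, hw, rfl⟩; exact hw.1.2.2.1.le))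
  have hσw : sInf S ≤ ‖w0‖ := csInf_le hbd hmem0
  obtain ⟨_, ⟨b, hb, rfl⟩, hbσ⟩ := exists_lt_of_csInf_lt ⟨_, hmem0⟩ (show sInf S < sInf S / (1 - s / 2) by
    rw [lt_div_iff₀ (by linarith)]; nlinarith)
  rw [lt_div_iff₀ (by linarith)] at hbσ
  simp only at hbσ
  have hbp : p < ‖b‖ := hb.1.2.2.1
  have hbn : 0 < ‖b‖ := norm_pos_iff.2 hb.1.2.1
  have hbs : 0 < ‖b‖ * s := by positivity
  have hbw : ‖b‖ ≤ 2 * ‖w0‖ := by nlinarith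
  refine ⟨b, hb.1, ‖b‖ * (1 - 3 / 4 * s), hb.2, ?_, by nlinarith, by nlinarith, ?_, ?_⟩
  · rw [lt_div_iff₀ (by positivity)]
    calc 3 * ‖b‖ * s * ((k : ℝ) + 1) ≤ 3 * (2 * ‖w0‖) * s * ((k : ℝ) + 1) := by gcongr
      _ < 1 := by linarith
  · rw [abs_of_nonpos (by nlinarith)]; nlinarith
  · rintro x ⟨t, ht, hx⟩ hxd
    set τ := ‖b‖ * (1 - 3 / 4 * s) with hτ
    have hτ0 : 0 < τ := by have : 0 < 1 - 3 / 4 * s := by linarith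
                           positivity
    obtain ⟨ha, hdir⟩ := dir_lemma hw0.2.1 hτ0 hs hs1.le hxd
    rw [abs_le] at ha
    have hτb : τ * s ≤ ‖b‖ * s := by gcongr; nlinarith
    have hx1 : ‖b‖ * (1 - s) < ‖x‖ := by nlinarith
    have hx2 : ‖x‖ < ‖b‖ * (1 - s / 2) := by nlinarith
    have hx0 : 0 < ‖x‖ := by nlinarith
    rw [← rp_smul ht x] at hdir
    have hle : sInf S ≤ ‖t • x‖ := csInf_le hbd ⟨_, ⟨hx, hdir⟩, rfl⟩
    rw [norm_smul, Real.norm_of_nonneg ht.le] at hle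
    have hfin := hx.2.2.2 t⁻¹ (by positivity) (by rw [inv_lt_one₀ ht]; nlinarith) (by
      rw [norm_smul, Real.norm_of_nonneg ht.le, ← mul_assoc, inv_mul_cancel₀ ht.ne', one_mul]
      nlinarith)
    rwa [smul_smul, inv_mul_cancel₀ ht.ne', one_smul] at hfin

lemma no_edge {n : ℕ} {E : Set (EE n)} {x : EE n} (hx0 : x ≠ 0) (k : ℕ)
    (hp : ∀ p q : ℚ, p < q → x ∉ coneOf {x : EE n | x ∈ Gset E k ∧ x ≠ 0 ∧ ‖x‖ < p ∧
      ∀ l : ℝ, 1 < l → l * ‖x‖ < q → HasDensity E (l • x) 1})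
    (hm : ∀ p q : ℚ, 0 < q → q < p → x ∉ coneOf {x : EE n | x ∈ Gset E k ∧ x ≠ 0 ∧ p < ‖x‖ ∧
      ∀ l : ℝ, 0 < l → l < 1 → q < l * ‖x‖ → HasDensity E (l • x) 1})
    {l η : ℝ} (hη : 0 < η) (hl : max 1 l • x ∈ Gset E k)
    (h : (∀ l' ∈ Set.Ioo l (l + η), HasDensity E (max 1 l' • x) 1) ∨
      (∀ l' ∈ Set.Ioo (l - η) l, HasDensity E (max 1 l' • x) 1)) : False := by
  have hxn : 0 < ‖x‖ := norm_pos_iff.2 hx0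
  rcases h with h | h
  · by_cases hl1 : l < 1
    · obtain ⟨l', h1, h2⟩ := exists_between (lt_min hl1 (lt_add_of_pos_right l hη))
      rw [lt_min_iff] at h2
      have := h l' ⟨h1, h2.2⟩
      rw [max_eq_left h2.1.le] at this
      rw [max_eq_left hl1.le] at hl
      exact G_not_dens hl this
    · rw [not_lt] at hl1
      have hl0 : 0 < l := by linarith
      rw [max_eq_right hl1] at hl
      obtain ⟨p, hp1, hp2⟩ := exists_rat_btwn (show l * ‖x‖ < (l + η) * ‖x‖ by nlinarith)
      obtain ⟨q, hq1, hq2⟩ := exists_rat_btwn hp2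
      have hnl : ‖l • x‖ = l * ‖x‖ := by rw [norm_smul, Real.norm_of_nonneg hl0.le]
      refine hp p q (by exact_mod_cast hq1) ⟨l, hl0, hl, smul_ne_zero hl0.ne' hx0, by rw [hnl]; exact hp1, ?_⟩
      intro m hm1 hm2
      rw [hnl, ← mul_assoc] at hm2
      have h3 : m * l < l + η := lt_of_mul_lt_mul_right (hm2.trans hq2) hxn.le
      have h4 : l < m * l := by nlinarith
      have := h (m * l) ⟨h4, h3⟩
      rwa [max_eq_right (by linarith), ← smul_smul] at this
  · by_cases hl1 : l ≤ 1
    · have := h (l - η / 2) ⟨by linarith, by linarith⟩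
      rw [max_eq_left (by linarith)] at this
      rw [max_eq_left hl1] at hl
      exact G_not_dens hl this
    · rw [not_le] at hl1
      have hl0 : 0 < l := by linarith
      rw [max_eq_right hl1.le] at hl
      have hmx : max 1 (l - η) < l := max_lt hl1 (by linarith)
      obtain ⟨q, hq1, hq2⟩ := exists_rat_btwn (show max 1 (l - η) * ‖x‖ < l * ‖x‖ by gcongr)
      obtain ⟨p, hp1, hp2⟩ := exists_rat_btwn hq2
      have hnl : ‖l • x‖ = l * ‖x‖ := by rw [norm_smul, Real.norm_of_nonneg hl0.le]
      have hq0 : (0 : ℝ) < q := lt_trans (by positivity) hq1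
      refine hm p q (by exact_mod_cast hq0) (by exact_mod_cast hp1)
        ⟨l, hl0, hl, smul_ne_zero hl0.ne' hx0, by rw [hnl]; exact hp2, ?_⟩
      intro m hm0 hm1 hm2
      rw [hnl, ← mul_assoc] at hm2
      have h3 : max 1 (l - η) < m * l := lt_of_mul_lt_mul_right (hq1.trans hm2) hxn.le
      rw [max_lt_iff] at h3
      have h4 : m * l < l := by nlinarith
      have := h (m * l) ⟨h3.2, h4⟩
      rwa [max_eq_right (by linarith), ← smul_smul] at this

open scoped Pointwise in
lemma ae_ray_leaves {n : ℕ} (hn : 2 ≤ n) {E : Set (EE n)} (hE : MeasurableSet E) (hfin : volume E ≠ ∞) :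
    ∀ᵐ x : EE n, ¬ ∀ l : ℝ, 1 ≤ l → HasDensity E (l • x) 1 := by
  have hset : volume {x : EE n | ∀ l : ℝ, 1 ≤ l → HasDensity E (l • x) 1} = 0 := by
    set M := {x : EE n | ∀ l : ℝ, 1 ≤ l → HasDensity E (l • x) 1}
    have hMfin : volume M ≠ ∞ := by
      refine ne_top_of_le_ne_top hfin ((vol_dens_le hn hE (S := M) ?_).trans (measure_mono Set.inter_subset_left))
      intro x hx
      simpa using hx 1 le_rfl
    have hsub : (2 : ℝ) • M ⊆ M := by
      rintro _ ⟨x, hx, rfl⟩ l hl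
      simp only [smul_smul]
      exact hx (l * 2) (by linarith)
    have h := measure_mono (μ := (volume : Measure (EE n))) hsub
    rw [Measure.addHaar_smul] at h
    simp only [finrank_euclideanSpace, Fintype.card_fin] at h
    by_contra hM0
    have h2 : ENNReal.ofReal |(2 : ℝ) ^ n| * volume M ≤ 1 * volume M := by rwa [one_mul]
    have h3 := (ENNReal.mul_le_mul_iff_left hM0 hMfin).1 h2
    rw [← ENNReal.ofReal_one, ENNReal.ofReal_le_ofReal_iff zero_le_one, abs_of_pos (by positivity)] at h3
    have : (1 : ℝ) < 2 ^ n := one_lt_pow₀ (by norm_num) (by omega)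
    linarith
  rw [ae_iff]
  simpa using hset

lemma ray_hits {n : ℕ} (hn : 2 ≤ n) {E : Set (EE n)} (hE : MeasurableSet E) (hfin : volume E ≠ ∞) :
    ∀ᵐ x : EE n, x ∈ E → ∃ l : ℝ, 1 ≤ l ∧ l • x ∈ essBoundary E := by
  have := nontriv_EE hn
  have hplus : ∀ F : Set (EE n), MeasurableSet F → ∀ᵐ x : EE n, ∀ k : ℕ, ∀ p q : ℚ, p < q →
      x ∉ coneOf {x : EE n | x ∈ Gset F k ∧ x ≠ 0 ∧ ‖x‖ < p ∧
      ∀ l : ℝ, 1 < l → l * ‖x‖ < q → HasDensity F (l • x) 1} := by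
    intro F hF
    rw [ae_all_iff]; intro k; rw [ae_all_iff]; intro p; rw [ae_all_iff]; intro q
    by_cases hpq : p < q
    · have h := cone_null_plus hn hF k (show (p : ℝ) < q by exact_mod_cast hpq)
      filter_upwards [measure_eq_zero_iff_ae_notMem.1 h] with x hx _ using hx
    · exact ae_of_all _ fun x h => absurd h hpq
  have hminus : ∀ F : Set (EE n), MeasurableSet F → ∀ᵐ x : EE n, ∀ k : ℕ, ∀ p q : ℚ, 0 < q → q < p →
      x ∉ coneOf {x : EE n | x ∈ Gset F k ∧ x ≠ 0 ∧ p < ‖x‖ ∧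
      ∀ l : ℝ, 0 < l → l < 1 → q < l * ‖x‖ → HasDensity F (l • x) 1} := by
    intro F hF
    rw [ae_all_iff]; intro k; rw [ae_all_iff]; intro p; rw [ae_all_iff]; intro q
    by_cases hq : 0 < q
    · by_cases hpq : q < p
      · have h := cone_null_minus hn hF k (show (0 : ℝ) < q by exact_mod_cast hq)
          (show (q : ℝ) < p by exact_mod_cast hpq)
        filter_upwards [measure_eq_zero_iff_ae_notMem.1 h] with x hx _ _ using hx
      · exact ae_of_all _ fun x _ h => absurd h hpq
    · exact ae_of_all _ fun x h => absurd h hq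
  have hne : ∀ᵐ y : EE n, y ≠ 0 := by rw [ae_iff]; simp
  filter_upwards [hne, ae_dens hn hE, ae_ray_leaves hn hE hfin, hplus E hE, hminus E hE,
    hplus Eᶜ hE.compl, hminus Eᶜ hE.compl] with x hx0 hd hM hp1 hm1 hp2 hm2 hxE
  by_contra hcon
  push Not at hcon
  have hdich : ∀ l : ℝ, 1 ≤ l → HasDensity E (l • x) 0 ∨ HasDensity E (l • x) 1 := by
    intro l hl
    have := hcon l hl
    simp only [essBoundary, Set.mem_setOf_eq] at this
    tauto
  let P : Set ℝ := {l | HasDensity E (max 1 l • x) 0}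
  have hPc : ∀ l, l ∉ P → HasDensity E (max 1 l • x) 1 := fun l hl =>
    (hdich (max 1 l) (le_max_left _ _)).resolve_left hl
  have hcont : Continuous fun l : ℝ => max 1 l • x := by fun_prop
  obtain ⟨k, l, η, hη, h⟩ := baire_ray (P := P) (A := fun k => (fun l : ℝ => max 1 l • x) ⁻¹' Gset E k)
    (B := fun k => (fun l : ℝ => max 1 l • x) ⁻¹' Gset Eᶜ k)
    (fun k => (isClosed_Gset E k).preimage hcont) (fun k => (isClosed_Gset Eᶜ k).preimage hcont)
    (by
      ext l
      simp only [Set.mem_iUnion, Set.mem_preimage]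
      constructor
      · rintro ⟨k, hk⟩
        exact (hdich (max 1 l) (le_max_left _ _)).resolve_right (G_not_dens hk)
      · intro h; exact dens_iff_G h)
    (by
      ext l
      simp only [Set.mem_iUnion, Set.mem_preimage]
      constructor
      · rintro ⟨k, hk⟩ hl
        exact G_not_dens hk ((dens_compl1 hE).2 hl)
      · intro h; exact dens_iff_G ((dens_compl0 hE).2 (hPc l h)))
    (by
      by_contra hP
      rw [Set.not_nonempty_iff_eq_empty] at hP
      refine hM fun l hl => ?_
      have := hPc l (by rw [hP]; simp)
      rwa [max_eq_right hl] at this)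
    (by
      intro hP
      have h1 : (1 : ℝ) ∈ P := by rw [hP]; trivial
      have h2 : HasDensity E (max 1 (1 : ℝ) • x) 0 := h1
      rw [max_self, one_smul] at h2
      exact dens_excl h2 (hd hxE))
  rcases h with ⟨hl, h⟩ | ⟨hl, h⟩
  · refine no_edge hx0 k (hp1 k) (hm1 k) hη hl ?_
    rcases h with h | h
    · exact Or.inl fun l' hl' => hPc l' (h hl')
    · exact Or.inr fun l' hl' => hPc l' (h hl')
  · refine no_edge hx0 k (hp2 k) (hm2 k) hη hl ?_
    rcases h with h | h
    · exact Or.inl fun l' hl' => (dens_compl1 hE).2 (h hl')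
    · exact Or.inr fun l' hl' => (dens_compl1 hE).2 (h hl')

lemma enn_rpow_sub_one {n : ℕ} (hn : 2 ≤ n) {r : ℝ} (hr : 0 < r) :
    ((Real.toNNReal r : NNReal) : ℝ≥0∞) ^ ((n : ℝ) - 1) = ENNReal.ofReal (r ^ (n - 1)) := by
  change (ENNReal.ofReal r) ^ ((n : ℝ) - 1) = _
  rw [ENNReal.ofReal_rpow_of_pos hr]
  congr 1
  rw [← Real.rpow_natCast, Nat.cast_sub (by omega)]; simp

open scoped Pointwise in
lemma cone_scale {n : ℕ} (T : Set (EE n)) {u : ℝ} (hu : 0 < u) :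
    volume (ball (0 : EE n) u ∩ rp ⁻¹' T) = ENNReal.ofReal (u ^ n) * volume (ball (0 : EE n) 1 ∩ rp ⁻¹' T) := by
  have e : ball (0 : EE n) u ∩ rp ⁻¹' T = u • (ball (0 : EE n) 1 ∩ rp ⁻¹' T) := by
    ext x
    rw [Set.mem_smul_set_iff_inv_smul_mem₀ hu.ne']
    simp only [Set.mem_inter_iff, mem_ball_zero_iff, Set.mem_preimage]
    rw [rp_smul (inv_pos.2 hu), norm_smul, norm_inv, Real.norm_of_nonneg hu.le, inv_mul_lt_iff₀ hu, mul_one]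
  rw [e, Measure.addHaar_smul]
  simp only [finrank_euclideanSpace, Fintype.card_fin]
  rw [abs_of_pos (by positivity)]

lemma cone_int {n : ℕ} {T : Set (EE n)} (hT : MeasurableSet T) {ρ : ℝ} (hρ : 0 < ρ) :
    ∫⁻ x in ball (0 : EE n) ρ ∩ rp ⁻¹' T, ENNReal.ofReal (ρ - ‖x‖) =
      ENNReal.ofReal (ρ ^ (n + 1) / (n + 1)) * volume (ball (0 : EE n) 1 ∩ rp ⁻¹' T) := by
  set S := ball (0 : EE n) ρ ∩ rp ⁻¹' T with hS
  have hSm : MeasurableSet S := measurableSet_ball.inter (measurable_rp hT)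
  rw [lintegral_eq_lintegral_meas_lt (μ := volume.restrict S) (f := fun x => ρ - ‖x‖)
    (by
      filter_upwards [ae_restrict_mem hSm] with x hx
      have := hx.1
      rw [mem_ball_zero_iff] at this
      simpa using this.le) (by fun_prop)]
  have h1 : ∀ t ∈ Set.Ioi (0 : ℝ), (volume.restrict S) {a : EE n | t < ρ - ‖a‖} =
      (Set.Iio ρ).indicator (fun t => ENNReal.ofReal ((ρ - t) ^ n) * volume (ball (0 : EE n) 1 ∩ rp ⁻¹' T)) t := by
    intro t ht
    have ht : 0 < t := ht
    have hset : {a : EE n | t < ρ - ‖a‖} = ball 0 (ρ - t) := by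
      ext a; rw [mem_ball_zero_iff]; constructor
      · intro (h : t < ρ - ‖a‖); linarith
      · intro h; change t < ρ - ‖a‖; linarith
    rw [hset, Measure.restrict_apply measurableSet_ball, hS, ← Set.inter_assoc,
      Set.inter_eq_left.2 (ball_subset_ball (by linarith))]
    by_cases h : t < ρ
    · rw [Set.indicator_of_mem (by exact h), cone_scale T (by linarith)]
    · rw [Set.indicator_of_notMem (by exact h), ball_eq_empty.2 (by linarith)]; simp
  rw [setLIntegral_congr_fun measurableSet_Ioi h1, lintegral_indicator measurableSet_Iio,
    Measure.restrict_restrict measurableSet_Iio, lintegral_mul_const _ (by fun_prop)]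
  congr 1
  have hset : Set.Iio ρ ∩ Set.Ioi 0 = Set.Ioo 0 ρ := by ext; simp [and_comm]
  rw [hset]
  have hint : ∫ t in (0 : ℝ)..ρ, (ρ - t) ^ n = ρ ^ (n + 1) / (n + 1) := by
    rw [intervalIntegral.integral_comp_sub_left (fun t => t ^ n)]; simp
  rw [← hint, intervalIntegral.integral_of_le hρ.le, integral_Ioc_eq_integral_Ioo,
    ofReal_integral_eq_lintegral_ofReal]
  · have hc : Continuous fun t : ℝ => (ρ - t) ^ n := by fun_prop
    exact (hc.integrableOn_Icc (a := 0) (b := ρ)).mono_set Set.Ioo_subset_Icc_self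
  · filter_upwards [ae_restrict_mem measurableSet_Ioo] with t ht
    have : 0 ≤ ρ - t := by linarith [ht.2]
    simpa using pow_nonneg this n

/-- the calibrating radial weight -/
def psi (n : ℕ) (R : ℝ) (x : EE n) : ℝ≥0∞ := ENNReal.ofReal ((2 * n * R - (n + 1) * ‖x‖) / R ^ 2)

lemma measurable_psi {n : ℕ} {R : ℝ} : Measurable (psi n R) := by unfold psi; fun_prop

lemma psi_int {n : ℕ} {T : Set (EE n)} (hT : MeasurableSet T) {R ρ : ℝ} (hR : 0 < R) (hρ : 0 < ρ)
    (hρs : (n + 1) * ρ ≤ 2 * n * R) :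
    ∫⁻ x in ball (0 : EE n) ρ ∩ rp ⁻¹' T, psi n R x =
      ENNReal.ofReal (n * (ρ ^ n * (2 * R - ρ)) / R ^ 2) * volume (ball (0 : EE n) 1 ∩ rp ⁻¹' T) := by
  have hSm : MeasurableSet (ball (0 : EE n) ρ ∩ rp ⁻¹' T) := measurableSet_ball.inter (measurable_rp hT)
  have h1 : ∀ x ∈ ball (0 : EE n) ρ ∩ rp ⁻¹' T, psi n R x =
      ENNReal.ofReal ((2 * n * R - (n + 1) * ρ) / R ^ 2) + ENNReal.ofReal ((n + 1) / R ^ 2) * ENNReal.ofReal (ρ - ‖x‖) := by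
    intro x hx
    have hx1 := hx.1
    rw [mem_ball_zero_iff] at hx1
    have a1 : 0 ≤ (2 * n * R - (n + 1) * ρ) / R ^ 2 := div_nonneg (by linarith) (by positivity)
    have a2 : 0 ≤ (n + 1) / R ^ 2 * (ρ - ‖x‖) := mul_nonneg (by positivity) (by linarith)
    rw [← ENNReal.ofReal_mul (by positivity), ← ENNReal.ofReal_add a1 a2]
    unfold psi; congr 1; field_simp; ring
  rw [setLIntegral_congr_fun hSm h1, lintegral_add_left (by fun_prop), lintegral_const_mul _ (by fun_prop), cone_int hT hρ,
    setLIntegral_const, cone_scale T hρ, ← mul_assoc, ← mul_assoc, ← add_mul]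
  have a1 : 0 ≤ (2 * n * R - (n + 1) * ρ) / R ^ 2 := div_nonneg (by linarith) (by positivity)
  rw [← ENNReal.ofReal_mul a1, ← ENNReal.ofReal_mul (by positivity), ← ENNReal.ofReal_add (by positivity) (by positivity)]
  congr 2
  have : (n : ℝ) + 1 ≠ 0 := by positivity
  field_simp; ring

lemma psi_le {n : ℕ} (hn : 2 ≤ n) {T : Set (EE n)} (hT : MeasurableSet T) {R ρ : ℝ} (hR : 0 < R) (hρ : 0 < ρ) :
    ∫⁻ x in ball (0 : EE n) ρ ∩ rp ⁻¹' T, psi n R x ≤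
      ENNReal.ofReal (n * ρ ^ (n - 1)) * volume (ball (0 : EE n) 1 ∩ rp ⁻¹' T) := by
  have key : ∀ ρ : ℝ, 0 < ρ → (n + 1) * ρ ≤ 2 * n * R → ∫⁻ x in ball (0 : EE n) ρ ∩ rp ⁻¹' T, psi n R x ≤
      ENNReal.ofReal (n * ρ ^ (n - 1)) * volume (ball (0 : EE n) 1 ∩ rp ⁻¹' T) := by
    intro ρ hρ hs
    rw [psi_int hT hR hρ hs]
    gcongr
    rw [div_le_iff₀ (by positivity)]
    obtain ⟨m, rfl⟩ : ∃ m, n = m + 1 := ⟨n - 1, by omega⟩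
    rw [Nat.add_sub_cancel, mul_assoc]
    apply mul_le_mul_of_nonneg_left _ (by positivity)
    rw [pow_succ, mul_assoc]
    apply mul_le_mul_of_nonneg_left _ (by positivity)
    nlinarith [sq_nonneg (R - ρ)]
  by_cases h : (n + 1) * ρ ≤ 2 * n * R
  · exact key ρ hρ h
  · rw [not_le] at h
    have hn0 : (0 : ℝ) < n := by exact_mod_cast (by omega : 0 < n)
    set s := 2 * n * R / (n + 1) with hs
    have hs0 : 0 < s := by positivity
    have hsn : (n + 1) * s = 2 * n * R := by rw [hs]; field_simp
    have hsρ : s ≤ ρ := by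
      by_contra hh; rw [not_le] at hh; nlinarith
    have h2 := key s hs0 hsn.le
    have h3 : ∫⁻ x in ball (0 : EE n) ρ ∩ rp ⁻¹' T, psi n R x ≤ ∫⁻ x in ball (0 : EE n) s ∩ rp ⁻¹' T, psi n R x := by
      rw [← lintegral_indicator (measurableSet_ball.inter (measurable_rp hT)),
        ← lintegral_indicator (measurableSet_ball.inter (measurable_rp hT))]
      apply lintegral_mono
      intro x
      by_cases hx : x ∈ ball (0 : EE n) ρ ∩ rp ⁻¹' T
      · rw [Set.indicator_of_mem hx]
        by_cases hxs : ‖x‖ < s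
        · rw [Set.indicator_of_mem]
          exact ⟨by simpa using hxs, hx.2⟩
        · have : psi n R x = 0 := by
            unfold psi
            rw [ENNReal.ofReal_eq_zero]
            apply div_nonpos_of_nonpos_of_nonneg _ (by positivity)
            rw [not_lt] at hxs
            nlinarith
          rw [this]; exact bot_le
      · rw [Set.indicator_of_notMem hx]; exact bot_le
    refine h3.trans (h2.trans ?_)
    gcongr

lemma calib_lam {n : ℕ} (hn : 2 ≤ n) {E : Set (EE n)} (hE : MeasurableSet E) (hfin : volume E ≠ ∞) {R : ℝ}
    (hR : 0 < R) {lam : ℝ} (hl : 1 < lam) :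
    (∫⁻ x in E, psi n R x) * μH[(n : ℝ) - 1] (sphere (0 : EE n) 1) ≤
      ENNReal.ofReal (lam ^ (n - 1)) * (n * volume (ball (0 : EE n) 1) * perimeter E) := by
  have := nontriv_EE hn
  set H : Measure (EE n) := μH[(n : ℝ) - 1] with hH
  have hl0 : 0 < lam := by linarith
  let sh : ℤ → Set (EE n) := fun j => (fun x : EE n => ‖x‖) ⁻¹' Set.Ico (lam ^ j) (lam ^ (j + 1))
  have hshm : ∀ j, MeasurableSet (sh j) := fun j => measurable_norm measurableSet_Ico
  let S : ℤ → Set (EE n) := fun j => sh j ∩ essBoundary E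
  let T : ℤ → Set (EE n) := fun j => toMeasurable (H.restrict (sphere (0 : EE n) 1)) (rp '' S j)
  have hTm : ∀ j, MeasurableSet (T j) := fun j => measurableSet_toMeasurable _ _
  have hTH : ∀ j, H (T j ∩ sphere (0 : EE n) 1) ≤ ENNReal.ofReal (((lam ^ j)⁻¹) ^ (n - 1)) * H (S j) := by
    intro j
    have hj : 0 < lam ^ j := zpow_pos hl0 j
    rw [← Measure.restrict_apply (hTm j), measure_toMeasurable]
    refine (Measure.restrict_apply_le _ _).trans ?_
    have h := ((lip_rp (n := n) hj).mono (s := S j) (fun x hx => hx.1.1)).hausdorffMeasure_image_le (d := (n : ℝ) - 1) (by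
      have : (2 : ℝ) ≤ n := by exact_mod_cast hn
      linarith)
    rwa [enn_rpow_sub_one hn (by positivity)] at h
  have hcov : ∀ᵐ x : EE n, x ∈ E → x ∈ ⋃ j : ℤ, ball (0 : EE n) (lam ^ (j + 1)) ∩ rp ⁻¹' (T j) := by
    have hne : ∀ᵐ y : EE n, y ≠ 0 := by rw [ae_iff]; simp
    filter_upwards [ray_hits hn hE hfin, hne] with x hx hx0 hxE
    obtain ⟨l, hl1, hlx⟩ := hx hxE
    have hlpos : 0 < l := by linarith
    have hnl : ‖l • x‖ = l * ‖x‖ := by rw [norm_smul, Real.norm_of_nonneg hlpos.le]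
    have hxn : 0 < ‖x‖ := norm_pos_iff.2 hx0
    obtain ⟨j, hj⟩ := exists_mem_Ico_zpow (show 0 < ‖l • x‖ by rw [hnl]; positivity) hl
    refine Set.mem_iUnion.2 ⟨j, ?_, ?_⟩
    · rw [mem_ball_zero_iff]
      refine lt_of_le_of_lt ?_ hj.2
      rw [hnl]; nlinarith
    · apply subset_toMeasurable
      rw [← rp_smul hlpos x]
      exact ⟨l • x, ⟨hj, hlx⟩, rfl⟩
  have h1 : ∫⁻ x in E, psi n R x ≤ ∑' j : ℤ, ∫⁻ x in ball (0 : EE n) (lam ^ (j + 1)) ∩ rp ⁻¹' (T j), psi n R x :=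
    (lintegral_mono_set' hcov).trans (lintegral_iUnion_le _ _)
  have h2 : ∀ j : ℤ, (∫⁻ x in ball (0 : EE n) (lam ^ (j + 1)) ∩ rp ⁻¹' (T j), psi n R x) * H (sphere (0 : EE n) 1) ≤
      ENNReal.ofReal (lam ^ (n - 1)) * (n * volume (ball (0 : EE n) 1)) * H (S j) := by
    intro j
    have hj : 0 < lam ^ j := zpow_pos hl0 j
    calc _ ≤ ENNReal.ofReal (n * (lam ^ (j + 1)) ^ (n - 1)) * volume (ball (0 : EE n) 1 ∩ rp ⁻¹' (T j)) * H (sphere (0 : EE n) 1) := by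
          gcongr; exact psi_le hn (hTm j) hR (zpow_pos hl0 _)
      _ = ENNReal.ofReal (n * (lam ^ (j + 1)) ^ (n - 1)) * (H (T j ∩ sphere (0 : EE n) 1) * volume (ball (0 : EE n) 1)) := by
          rw [mul_assoc, cone_measure hn (T j) (hTm j)]
      _ ≤ ENNReal.ofReal (n * (lam ^ (j + 1)) ^ (n - 1)) * ((ENNReal.ofReal (((lam ^ j)⁻¹) ^ (n - 1)) * H (S j)) * volume (ball (0 : EE n) 1)) := by
          gcongr; exact hTH j
      _ = ENNReal.ofReal (lam ^ (n - 1)) * (n * volume (ball (0 : EE n) 1)) * H (S j) := by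
          have e : ENNReal.ofReal (n * (lam ^ (j + 1)) ^ (n - 1)) * ENNReal.ofReal (((lam ^ j)⁻¹) ^ (n - 1)) =
              ENNReal.ofReal (lam ^ (n - 1)) * n := by
            rw [← ENNReal.ofReal_mul (by positivity), ← ENNReal.ofReal_natCast, ← ENNReal.ofReal_mul (by positivity)]
            congr 1
            rw [mul_assoc, ← mul_pow, zpow_add_one₀ hl0.ne', mul_comm (lam ^ j), mul_assoc, mul_inv_cancel₀ hj.ne', mul_one, mul_comm]
          calc _ = (ENNReal.ofReal (n * (lam ^ (j + 1)) ^ (n - 1)) * ENNReal.ofReal (((lam ^ j)⁻¹) ^ (n - 1))) * H (S j) * volume (ball (0 : EE n) 1) := by ring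
            _ = _ := by rw [e]; ring
  have h3 : ∑' j : ℤ, H (S j) ≤ perimeter E := by
    have e : ∀ j, H (S j) = (H.restrict (essBoundary E)) (sh j) := fun j => (Measure.restrict_apply (hshm j)).symm
    simp_rw [e]
    rw [← measure_iUnion _ hshm]
    · refine (measure_mono (Set.subset_univ _)).trans ?_
      rw [Measure.restrict_apply_univ]; rfl
    · intro i j hij
      refine Disjoint.preimage _ (Set.disjoint_left.2 fun t h1 h2 => hij ?_)
      have a1 : i < j + 1 := (zpow_lt_zpow_iff_right₀ hl).1 (h1.1.trans_lt h2.2)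
      have a2 : j < i + 1 := (zpow_lt_zpow_iff_right₀ hl).1 (h2.1.trans_lt h1.2)
      omega
  calc _ ≤ (∑' j : ℤ, ∫⁻ x in ball (0 : EE n) (lam ^ (j + 1)) ∩ rp ⁻¹' (T j), psi n R x) * H (sphere (0 : EE n) 1) := by
        gcongr
    _ = ∑' j : ℤ, (∫⁻ x in ball (0 : EE n) (lam ^ (j + 1)) ∩ rp ⁻¹' (T j), psi n R x) * H (sphere (0 : EE n) 1) := by
        rw [ENNReal.tsum_mul_right]
    _ ≤ ∑' j : ℤ, ENNReal.ofReal (lam ^ (n - 1)) * (n * volume (ball (0 : EE n) 1)) * H (S j) := ENNReal.tsum_le_tsum h2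
    _ = ENNReal.ofReal (lam ^ (n - 1)) * (n * volume (ball (0 : EE n) 1)) * ∑' j : ℤ, H (S j) := ENNReal.tsum_mul_left
    _ ≤ ENNReal.ofReal (lam ^ (n - 1)) * (n * volume (ball (0 : EE n) 1)) * perimeter E := by gcongr
    _ = _ := by ring

lemma calib {n : ℕ} (hn : 2 ≤ n) {E : Set (EE n)} (hE : MeasurableSet E) (hfin : volume E ≠ ∞) {R : ℝ}
    (hR : 0 < R) :
    (∫⁻ x in E, psi n R x) * μH[(n : ℝ) - 1] (sphere (0 : EE n) 1) ≤
      n * volume (ball (0 : EE n) 1) * perimeter E := by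
  have ht : Tendsto (fun lam : ℝ => ENNReal.ofReal (lam ^ (n - 1)) * (n * volume (ball (0 : EE n) 1) * perimeter E))
      (nhdsWithin 1 (Set.Ioi 1)) (nhds (1 * (n * volume (ball (0 : EE n) 1) * perimeter E))) := by
    apply ENNReal.Tendsto.mul_const _ (Or.inl one_ne_zero)
    have hc : Continuous fun lam : ℝ => ENNReal.ofReal (lam ^ (n - 1)) :=
      ENNReal.continuous_ofReal.comp (continuous_pow _)
    have := (hc.tendsto 1).mono_left (nhdsWithin_le_nhds (s := Set.Ioi 1))
    simpa using this
  rw [one_mul] at ht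
  refine ge_of_tendsto ht ?_
  filter_upwards [self_mem_nhdsWithin] with lam hl
  exact calib_lam hn hE hfin hR hl

open scoped Pointwise in
lemma per_ball {n : ℕ} (hn : 2 ≤ n) {R : ℝ} (hR : 0 < R) :
    perimeter (ball (0 : EE n) R) ≤ ENNReal.ofReal (R ^ (n - 1)) * μH[(n : ℝ) - 1] (sphere (0 : EE n) 1) := by
  have := nontriv_EE hn
  have hsub : essBoundary (ball (0 : EE n) R) ⊆ R • sphere (0 : EE n) 1 := by
    rw [_root_.smul_sphere _ _ zero_le_one, smul_zero, Real.norm_of_nonneg hR.le, mul_one]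
    rintro x ⟨h0, h1⟩
    by_contra hx
    rw [mem_sphere_zero_iff_norm] at hx
    rcases lt_or_gt_of_ne hx with h | h
    · apply h1
      refine tendsto_const_nhds.congr' ?_
      filter_upwards [Ioo_mem_nhdsGT (sub_pos.2 h)] with r hr
      rw [Set.inter_eq_right.2, div_self (vball_toReal_pos x hr.1).ne']
      apply ball_subset_ball'
      rw [dist_zero_right]; linarith [hr.2]
    · apply h0
      refine tendsto_const_nhds.congr' ?_
      filter_upwards [Ioo_mem_nhdsGT (sub_pos.2 h)] with r hr
      have : ball (0 : EE n) R ∩ ball x r = ∅ := by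
        rw [← Set.disjoint_iff_inter_eq_empty]
        apply ball_disjoint_ball
        rw [dist_zero_left]; linarith [hr.2]
      simp [this]
  refine (measure_mono hsub).trans ?_
  have hd : (0 : ℝ) ≤ (n : ℝ) - 1 := by
    have : (2 : ℝ) ≤ n := by exact_mod_cast hn
    linarith
  rw [Measure.hausdorffMeasure_smul₀ hd hR.ne', ← enn_rpow_sub_one hn hR, ENNReal.smul_def, smul_eq_mul]
  gcongr
  rw [ENNReal.coe_rpow_of_nonneg _ hd]
  gcongr
  rw [← NNReal.coe_le_coe]
  simp [abs_of_pos hR, hR.le]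

lemma per_fin {n : ℕ} (hn : 2 ≤ n) {R : ℝ} (hR : 0 < R) : perimeter (ball (0 : EE n) R) ≠ ∞ :=
  ne_top_of_le_ne_top (ENNReal.mul_ne_top ofReal_ne_top (hausdorff_sphere_fin hn).ne) (per_ball hn hR)

lemma per_ineq {n : ℕ} (hn : 2 ≤ n) :
    ∃ C : ℝ, 0 ≤ C ∧ ∀ R : ℝ, 0 < R → ∀ E : Set (EE n), MeasurableSet E →
      volume E = volume (ball (0 : EE n) R) →
      perimeter (ball (0 : EE n) R) ≤ perimeter E +
        ENNReal.ofReal (C / R ^ 2) * ∫⁻ x in symmDiff E (ball (0 : EE n) R), rd R x := by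
  have hH0 := hausdorff_sphere_pos hn
  have hHf := (hausdorff_sphere_fin hn).ne
  set H0 := μH[(n : ℝ) - 1] (sphere (0 : EE n) 1) with hH0def
  set κ := volume (ball (0 : EE n) 1) with hκ
  have hκ0 : κ ≠ 0 := (measure_ball_pos _ _ one_pos).ne'
  have hκf : κ ≠ ∞ := measure_ball_lt_top.ne
  have hn0 : (0 : ℝ) < n := by exact_mod_cast (by omega : 0 < n)
  have hκp : 0 < κ.toReal := ENNReal.toReal_pos hκ0 hκf
  refine ⟨(n + 1) * H0.toReal / (n * κ.toReal), by positivity, fun R hR E hE hEB => ?_⟩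
  have hsw := swap_ineq hE measurableSet_ball hEB measure_ball_lt_top.ne (psi n R)
    (fun x => ENNReal.ofReal ((n + 1) / R ^ 2) * rd R x) 0 measurable_psi ((measurable_rd R).const_mul _)
    (ENNReal.ofReal ((2 * n * R - (n + 1) * R) / R ^ 2)) ofReal_ne_top
    (by
      intro x _
      simp only [Pi.zero_apply, add_zero]
      unfold psi rd
      rw [← ENNReal.ofReal_mul (by positivity)]
      refine le_trans ?_ ENNReal.ofReal_add_le
      apply ENNReal.ofReal_le_ofReal
      have := neg_abs_le (‖x‖ - R)
      rw [div_mul_eq_mul_div, ← add_div]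
      gcongr
      nlinarith)
    (by
      intro x _
      simp only [Pi.zero_apply, add_zero]
      unfold psi rd
      rw [← ENNReal.ofReal_mul (by positivity)]
      refine le_trans ?_ ENNReal.ofReal_add_le
      apply ENNReal.ofReal_le_ofReal
      have := le_abs_self (‖x‖ - R)
      rw [div_mul_eq_mul_div, ← add_div]
      gcongr
      nlinarith)
  simp only [Pi.zero_apply, lintegral_zero, add_zero] at hsw
  rw [lintegral_const_mul _ (measurable_rd R)] at hsw
  set D := ∫⁻ x in symmDiff E (ball (0 : EE n) R), rd R x
  have hBint : ∫⁻ x in ball (0 : EE n) R, psi n R x = ENNReal.ofReal (n * R ^ (n - 1)) * κ := by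
    have h := psi_int (n := n) (T := Set.univ) MeasurableSet.univ hR hR (by
      have : (1 : ℝ) ≤ n := by exact_mod_cast (by omega : 1 ≤ n)
      nlinarith)
    simp only [Set.preimage_univ, Set.inter_univ] at h
    rw [h]
    congr 2
    obtain ⟨m, rfl⟩ : ∃ m, n = m + 1 := ⟨n - 1, by omega⟩
    rw [Nat.add_sub_cancel]
    field_simp; ring
  have hcal := calib hn hE (by rw [hEB]; exact measure_ball_lt_top.ne) hR
  rw [← hκ, ← hH0def] at hcal
  have hpb := per_ball hn hR
  rw [← hH0def] at hpb
  have hnκ0 : (n : ℝ≥0∞) * κ ≠ 0 := mul_ne_zero (by simp; omega) hκ0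
  have hnκf : (n : ℝ≥0∞) * κ ≠ ∞ := ENNReal.mul_ne_top (by simp) hκf
  rw [← ENNReal.mul_le_mul_iff_right hnκ0 hnκf]
  have hC : (n : ℝ≥0∞) * κ * ENNReal.ofReal ((n + 1) * H0.toReal / (n * κ.toReal) / R ^ 2) =
      ENNReal.ofReal ((n + 1) / R ^ 2) * H0 := by
    rw [← ENNReal.ofReal_toReal hHf, ← ENNReal.ofReal_toReal hκf, ← ENNReal.ofReal_natCast,
      ← ENNReal.ofReal_mul (by positivity), ← ENNReal.ofReal_mul (by positivity), ← ENNReal.ofReal_mul (by positivity)]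
    congr 1
    rw [ENNReal.toReal_ofReal (by positivity), ENNReal.toReal_ofReal (by positivity)]
    field_simp
  calc (n : ℝ≥0∞) * κ * perimeter (ball (0 : EE n) R)
      ≤ n * κ * (ENNReal.ofReal (R ^ (n - 1)) * H0) := by gcongr
    _ = (ENNReal.ofReal (n * R ^ (n - 1)) * κ) * H0 := by
        rw [ENNReal.ofReal_mul (by positivity), ENNReal.ofReal_natCast]; ring
    _ = (∫⁻ x in ball (0 : EE n) R, psi n R x) * H0 := by rw [hBint]
    _ ≤ ((∫⁻ x in E, psi n R x) + ENNReal.ofReal ((n + 1) / R ^ 2) * D) * H0 := by gcongr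
    _ = (∫⁻ x in E, psi n R x) * H0 + ENNReal.ofReal ((n + 1) / R ^ 2) * H0 * D := by ring
    _ ≤ n * κ * perimeter E + ENNReal.ofReal ((n + 1) / R ^ 2) * H0 * D := by gcongr
    _ = _ := by rw [← hC]; ring

lemma pot_fin {n : ℕ} {β A R : ℝ} (hβ : 0 < β) (hA : 0 < A) :
    potEnergy β A (ball (0 : EE n) R) ≠ ∞ := by
  have : potEnergy β A (ball (0 : EE n) R) ≤ ENNReal.ofReal (A * R ^ β) * volume (ball (0 : EE n) R) := by
    unfold potEnergy
    rw [← setLIntegral_const]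
    refine setLIntegral_mono (by fun_prop) fun x hx => ?_
    rw [mem_ball_zero_iff] at hx
    gcongr
  exact ne_top_of_le_ne_top (ENNReal.mul_ne_top ofReal_ne_top measure_ball_lt_top.ne) this

lemma total_ineq {n : ℕ} (hn : 2 ≤ n) {α β A : ℝ} (hα1 : 1 < α) (hαn : α < n) (hA : 0 < A) (hαβ : α < β) :
    ∃ R0 : ℝ, 1 ≤ R0 ∧ ∀ R : ℝ, R0 < R → ∀ E : Set (EE n), MeasurableSet E →
      volume E = volume (ball (0 : EE n) R) →
      totalEnergy α β A (ball (0 : EE n) R) + ∫⁻ x in symmDiff E (ball (0 : EE n) R), rd R x ≤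
        totalEnergy α β A E := by
  obtain ⟨C1, hC1, hP⟩ := per_ineq hn
  obtain ⟨C2, hC2, hV⟩ := riesz_ineq hn hα1 hαn
  have hev := (tendsto_rpow_atTop (sub_pos.2 hαβ)).eventually_ge_atTop ((C1 + C2 + 1) / A)
  obtain ⟨R1, hR1⟩ := eventually_atTop.1 hev
  refine ⟨max 1 R1, le_max_left _ _, fun R hR E hE hEB => ?_⟩
  have hR1' : 1 < R := (le_max_left _ _).trans_lt hR
  have hR0 : 0 < R := by linarith
  have h1 := hR1 R ((le_max_right _ _).trans hR.le)
  rw [div_le_iff₀ hA] at h1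
  have hpow : 1 ≤ R ^ (α - 1) := Real.one_le_rpow hR1'.le (by linarith)
  have hmul : R ^ (β - 1) = R ^ (β - α) * R ^ (α - 1) := by
    rw [← Real.rpow_add hR0]; congr 1; ring
  have hkey : C1 / R ^ 2 + C2 * R ^ (α - 1) + 1 ≤ A * R ^ (β - 1) := by
    have a1 : C1 / R ^ 2 ≤ C1 * R ^ (α - 1) := by
      have : C1 / R ^ 2 ≤ C1 := div_le_self hC1 (one_le_pow₀ hR1'.le)
      nlinarith
    rw [hmul]
    calc _ ≤ (C1 + C2 + 1) * R ^ (α - 1) := by nlinarith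
      _ ≤ (R ^ (β - α) * A) * R ^ (α - 1) := by gcongr
      _ = _ := by ring
  have hP' := hP R hR0 E hE hEB
  have hV' := hV R hR0 E hE hEB
  have hU' := pot_ineq (β := β) (by linarith) hA hR0 hE hEB
  set D := ∫⁻ x in symmDiff E (ball (0 : EE n) R), rd R x
  have hC2' : 0 ≤ C2 * R ^ (α - 1) := by positivity
  have ha : ENNReal.ofReal (C1 / R ^ 2) + ENNReal.ofReal (C2 * R ^ (α - 1)) + 1 ≤ ENNReal.ofReal (A * R ^ (β - 1)) := by
    rw [← ENNReal.ofReal_one, ← ENNReal.ofReal_add (by positivity) hC2', ← ENNReal.ofReal_add (by positivity) (by norm_num)]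
    exact ENNReal.ofReal_le_ofReal hkey
  set c1 := ENNReal.ofReal (C1 / R ^ 2)
  set c2 := ENNReal.ofReal (C2 * R ^ (α - 1))
  set a := ENNReal.ofReal (A * R ^ (β - 1))
  unfold totalEnergy
  by_cases hD : D = ∞
  · have : potEnergy β A E = ∞ := by
      rw [eq_top_iff]
      refine le_trans ?_ hU'
      have h1a : 1 ≤ a := le_trans le_add_self ha
      calc ∞ = 1 * D := by rw [hD, one_mul]
        _ ≤ a * D := by gcongr
        _ ≤ _ := le_add_self
    rw [this]; simp
  · have hcf : (c1 + c2) * D ≠ ∞ := ENNReal.mul_ne_top (by simp [c1, c2]) hD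
    rw [← ENNReal.add_le_add_iff_right hcf]
    set B := ball (0 : EE n) R
    calc perimeter B + rieszEnergy α B + potEnergy β A B + D + (c1 + c2) * D
        = perimeter B + rieszEnergy α B + (potEnergy β A B + (c1 + c2 + 1) * D) := by ring
      _ ≤ perimeter B + rieszEnergy α B + (potEnergy β A B + a * D) := by gcongr
      _ ≤ (perimeter E + c1 * D) + (rieszEnergy α E + c2 * D) + potEnergy β A E := by gcongr
      _ = _ := by ring

theorem statement2 (n : ℕ) (hn : 2 ≤ n) (α β A : ℝ)
    (hα1 : 1 < α) (hαn : α < n) (hβ : 0 < β) (hA : 0 < A) (hαβ : α < β) :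
    ∃ m₁ : ℝ, 0 < m₁ ∧ ∀ m, m₁ < m →
      IsMinimizer α β A m (ballOfVolume n m) ∧
      ∀ E : Set (EuclideanSpace ℝ (Fin n)), IsMinimizer α β A m E →
        volume (symmDiff E (ballOfVolume n m)) = 0 := by
  have := nontriv_EE hn
  obtain ⟨R0, hR0, hT⟩ := total_ineq hn hα1 hαn hA hαβ
  set ω := (volume (unitBall n)).toReal with hω
  have hωp : 0 < ω := vball_toReal_pos _ one_pos
  have hR0p : 0 < R0 := by linarith
  refine ⟨ω * R0 ^ n, by positivity, fun m hm => ?_⟩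
  have hm0 : 0 < m := lt_trans (by positivity) hm
  set R := (m / ω) ^ (1 / (n : ℝ)) with hR
  have hn0 : (n : ℝ) ≠ 0 := by positivity
  have hRn : R ^ n = m / ω := by
    rw [hR, one_div, Real.rpow_inv_natCast_pow (by positivity) (by omega)]
  have hRp : 0 < R := by positivity
  have hRR : R0 < R := by
    have : R0 ^ n < R ^ n := by rw [hRn, lt_div_iff₀ hωp]; linarith
    exact lt_of_pow_lt_pow_left₀ n hRp.le this
  have hB : ballOfVolume n m = ball (0 : EE n) R := rfl
  have hvol : volume (ball (0 : EE n) R) = ENNReal.ofReal m := by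
    have e : volume (ball (0 : EE n) 1) = ENNReal.ofReal ω := (ENNReal.ofReal_toReal measure_ball_lt_top.ne).symm
    rw [vball_pow _ hRp, e, ← ENNReal.ofReal_mul (by positivity), hRn, div_mul_cancel₀ _ hωp.ne']
  rw [hB]
  refine ⟨⟨measurableSet_ball, hvol, fun F hF hFv => ?_⟩, fun E hE => ?_⟩
  · exact le_self_add.trans (hT R hRR F hF (hFv.trans hvol.symm))
  · obtain ⟨hEm, hEv, hEmin⟩ := hE
    have h1 := hT R hRR E hEm (hEv.trans hvol.symm)
    have h2 := hEmin _ measurableSet_ball hvol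
    have hfin : totalEnergy α β A (ball (0 : EE n) R) ≠ ∞ := by
      unfold totalEnergy
      exact ENNReal.add_ne_top.2 ⟨ENNReal.add_ne_top.2 ⟨per_fin hn hRp, riesz_fin hn hα1 hαn hRp⟩, pot_fin hβ hA⟩
    have hD : ∫⁻ x in symmDiff E (ball (0 : EE n) R), rd R x = 0 := by
      have h3 := h1.trans h2
      have h4 : totalEnergy α β A (ball (0 : EE n) R) + ∫⁻ x in symmDiff E (ball (0 : EE n) R), rd R x ≤
        totalEnergy α β A (ball (0 : EE n) R) + 0 := by rwa [add_zero]
      exact le_antisymm ((ENNReal.add_le_add_iff_left hfin).1 h4) bot_le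
    have hsm : MeasurableSet (symmDiff E (ball (0 : EE n) R)) := hEm.symmDiff measurableSet_ball
    rw [lintegral_eq_zero_iff (measurable_rd R), Filter.EventuallyEq, ae_restrict_iff' hsm] at hD
    have hs : volume (sphere (0 : EE n) R) = 0 := Measure.addHaar_sphere _ _ _
    refine le_antisymm ((measure_mono_ae ?_).trans hs.le) bot_le
    filter_upwards [hD] with x hx hxs
    have h5 := hx hxs
    simp only [rd, Pi.zero_apply, ENNReal.ofReal_eq_zero] at h5
    have h6 := abs_eq_zero.1 (le_antisymm h5 (abs_nonneg _))
    change x ∈ sphere (0 : EE n) R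
    rw [mem_sphere_zero_iff_norm]; linarith
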